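/- arXiv:math/0701312 — 2 statements merged into one kernel-verified Lean document; each statement's English description precedes it below -/
import Mathlib

section
/- Let n ≥ 2 and let F, G be coprime completely reducible homogeneous polynomials of the same degree d ≥ 1 in R = MvPolynomial (Fin (n+1)) ℂ such that: the generic fiber of the pencil 𝒫 generated by F and G is irreducible; the pencil is essential (the linear factors of F together with those of G span the full (n+1)-dimensional space of degree-1 forms); and there exists a member K = aF + bG of 𝒫, distinct from F and from G, of the form K = (∏_{i=1}^r ℓ_i)·(∏_{j=1}^s g_j^{e_j}) with ℓ_i linear forms, g_j irreducible homogeneous polynomials, and e_j ≥ 2 for all j (a product of linear forms and non-reduced polynomials). Then the Jacobian determinant det(∂_j b_i)_{0≤i,j≤n} of the coefficients b_i = F·∂_iG − G·∂_iF of ω₀ = F dG − G dF is not the zero polynomial (equivalently, the Gauss map of the foliation associated to 𝒫 is non-degenerate, i.e. dominant). -/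
open MvPolynomial

noncomputable section

/-- A linear form: a nonzero homogeneous polynomial of degree 1. -/
def IsLinearForm (n : ℕ) (α : MvPolynomial (Fin (n + 1)) ℂ) : Prop :=
  α ≠ 0 ∧ α.IsHomogeneous 1

/-- A completely reducible polynomial: a product of linear forms. -/
def CompletelyReducible (n : ℕ) (P : MvPolynomial (Fin (n + 1)) ℂ) : Prop :=
  ∃ s : Multiset (MvPolynomial (Fin (n + 1)) ℂ),
    (∀ α ∈ s, IsLinearForm n α) ∧ P = s.prod

/-- F and G have no common non-unit factor. -/
def RelPrime (n : ℕ) (F G : MvPolynomial (Fin (n + 1)) ℂ) : Prop :=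
  ∀ p : MvPolynomial (Fin (n + 1)) ℂ, p ∣ F → p ∣ G → IsUnit p

/-- The generic fiber of the pencil generated by F and G is irreducible. -/
def GenericFiberIrreducible (n : ℕ) (F G : MvPolynomial (Fin (n + 1)) ℂ) : Prop :=
  {c : ℂ | ¬ Irreducible (F + C c * G)}.Finite

/-! The coefficients of `ω₀ = F dG - G dF` are `F * G` times those of the logarithmic form
`η = dG/G - dF/F = ∑ c_t dℓ_t/ℓ_t`, where `ℓ_t` runs over the linear factors of `F` and `G` and
`c_t = ±1`. If the Jacobian matrix of `ω₀` kills a nonzero vector field, then after a correction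
by a multiple of the Euler field so does the Jacobian matrix of `η`: some `w ≠ 0` satisfies
`∇_w η = 0`. Like the fibers of a Gauss map, the fibers of `η` are linear: differentiating
`∇_w η = 0` repeatedly shows that `η(x + τ w) = ∑ c_t dℓ_t / (ℓ_t(x) + τ ∇_w ℓ_t)` has constant
Taylor coefficients in `τ`. Hence its poles in `τ` cancel, i.e. the terms with a common nonzero
value of `∇_w ℓ_t / ℓ_t` sum to zero. As the pencil is essential, such a nonempty set of terms
exists. It gives factors `P ∣ F` and `Q ∣ G`, not both constant, with `P dQ = Q dP`, contradicting
coprimality. -/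

section DerivationExtension

variable {R S T M : Type*} [CommRing R] [CommRing S] [CommRing T] [Algebra R S] [Algebra R T]
  [Algebra S T] [IsScalarTower R S T] [Algebra.FormallyEtale S T] [AddCommGroup M] [Module R M]
  [Module S M] [Module T M] [IsScalarTower R S M] [IsScalarTower R T M] [IsScalarTower S T M]

/-- The extension of a derivation on `S` to a formally étale `S`-algebra `T`, such as a
localization, built from the isomorphism `T ⊗[S] Ω[S⁄R] ≃ Ω[T⁄R]`. -/
def extendFormallyEtale (d : Derivation R S M) : Derivation R T M :=
  ((d.liftKaehlerDifferential.liftBaseChange T) ∘ₗ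
    (KaehlerDifferential.tensorKaehlerEquivOfFormallyEtale R S T).symm.toLinearMap).compDer
      (KaehlerDifferential.D R T)

theorem extendFormallyEtale_algebraMap (d : Derivation R S M) (s : S) :
    extendFormallyEtale (T := T) d (algebraMap S T s) = d s := by
  simp [extendFormallyEtale,
    KaehlerDifferential.tensorKaehlerEquivOfFormallyEtale_symm_D_algebraMap]

end DerivationExtension

theorem sum_filter_eq_zero_of_sum_pow_mul_eq_zero {ι K : Type*} [Field K] [DecidableEq K]
    {T : Finset ι} {s c : ι → K} (h : ∀ j : ℕ, ∑ t ∈ T, s t ^ (j + 1) * c t = 0) {y : K}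
    (hy : y ≠ 0) : ∑ t ∈ T with s t = y, c t = 0 := by
  let q : Polynomial K := Lagrange.basis (insert y (T.image s)) id y
  have hq_self : q.eval y = 1 :=
    Lagrange.eval_basis_self (v := id) Function.injective_id.injOn (Finset.mem_insert_self _ _)
  have hq_ne : ∀ t ∈ T, s t ≠ y → q.eval (s t) = 0 := fun t ht hne ↦
    Lagrange.eval_basis_of_ne (v := id) hne.symm
      (Finset.mem_insert_of_mem (Finset.mem_image_of_mem s ht))
  have hsum_zero : ∑ t ∈ T, s t * q.eval (s t) * c t = 0 := by
    calc ∑ t ∈ T, s t * q.eval (s t) * c t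
        = ∑ j ∈ Finset.range (q.natDegree + 1), q.coeff j * ∑ t ∈ T, s t ^ (j + 1) * c t := by
          simp_rw [Polynomial.eval_eq_sum_range, Finset.mul_sum, Finset.sum_mul]
          rw [Finset.sum_comm]
          exact Finset.sum_congr rfl fun j _ ↦ Finset.sum_congr rfl fun t _ ↦ by ring
      _ = 0 := by simp only [h, mul_zero, Finset.sum_const_zero]
  have hsum_filter : ∑ t ∈ T, s t * q.eval (s t) * c t = y * ∑ t ∈ T with s t = y, c t := by
    rw [Finset.mul_sum, Finset.sum_filter]
    refine Finset.sum_congr rfl fun t ht ↦ ?_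
    split_ifs with hty
    · rw [hty, hq_self, mul_one]
    · rw [hq_ne t ht hty, mul_zero, zero_mul]
  exact (mul_eq_zero.mp (hsum_filter ▸ hsum_zero)).resolve_left hy

section LogForm

variable {k K σ ι : Type*} [CommRing k] [Field K] [Algebra k K]

/-- The logarithmic derivative of `y` with respect to the derivation `E`; its value at `0` is
`0`. `Differential.logDeriv` treats a single fixed derivation. -/
def dlog (E : Derivation k K K) (y : K) : K := E y / y

theorem dlog_prod (E : Derivation k K K) {a : ι → K} {S : Finset ι} (ha : ∀ t ∈ S, a t ≠ 0) :
    dlog E (∏ t ∈ S, a t) = ∑ t ∈ S, dlog E (a t) :=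
  letI : Differential K := ⟨E.restrictScalars ℤ⟩
  Differential.logDeriv_prod ι S a ha

theorem derivation_dlog {E E' : Derivation k K K} {y : K} (h : E' (E y) = 0) :
    E' (dlog E y) = -(dlog E' y * dlog E y) := by
  rw [dlog, Derivation.leibniz_div, h, dlog]
  simp only [smul_eq_mul]
  ring

/-- The coefficient along `D i` of the logarithmic `1`-form `∑ t ∈ S, c t • d(a t) / a t`. -/
def logForm (D : σ → Derivation k K K) (c : ι → k) (a : ι → K) (S : Finset ι) (i : σ) : K :=
  ∑ t ∈ S, c t • dlog (D i) (a t)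

/-- The derivative `∑ i, w i • D i` along the vector field with components `w`. -/
def along [Fintype σ] (D : σ → Derivation k K K) (w : σ → K) : Derivation k K K :=
  ∑ i, w i • D i

variable {D : σ → Derivation k K K} {c : ι → k} {a : ι → K}

theorem derivation_logForm (E : Derivation k K K) {S : Finset ι} {i : σ}
    (h : ∀ t ∈ S, E (D i (a t)) = 0) :
    E (logForm D c a S i) = -∑ t ∈ S, c t • (dlog E (a t) * dlog (D i) (a t)) := by
  simp only [logForm, map_sum, Derivation.map_smul, ← Finset.sum_neg_distrib, ← smul_neg]
  exact Finset.sum_congr rfl fun t ht ↦ by rw [derivation_dlog (h t ht)]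

variable [Fintype σ]

theorem along_apply (w : σ → K) (y : K) : along D w y = ∑ i, w i * D i y := by
  simp only [along, ← Derivation.coeFnAddMonoidHom_apply, map_sum, Finset.sum_apply]
  rfl

theorem dlog_along (w : σ → K) (y : K) :
    dlog (along D w) y = ∑ i, w i * dlog (D i) y := by
  simp only [dlog, along_apply, Finset.sum_div, mul_div_assoc]

theorem along_derivation_eq_zero {i : σ} {y : K} (h : ∀ j, D j (D i y) = 0) (w : σ → K) :
    along D w (D i y) = 0 := by
  simp only [along_apply, h, mul_zero, Finset.sum_const_zero]

theorem derivation_dlog_along {j : σ} {y : K} (h : ∀ i, D j (D i y) = 0) (w : σ → K) :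
    D j (dlog (along D w) y) =
      dlog (along D fun i ↦ D j (w i)) y - dlog (along D w) y * dlog (D j) y := by
  have hterm (i : σ) : D j (w i * dlog (D i) y) =
      D j (w i) * dlog (D i) y - w i * dlog (D i) y * dlog (D j) y := by
    rw [Derivation.leibniz, derivation_dlog (h i)]
    simp only [smul_eq_mul]
    ring
  simp only [dlog_along, map_sum, hterm, Finset.sum_sub_distrib, Finset.sum_mul]

/-- The kernel vector `v` of the Jacobian matrix of `u • η` is corrected by a multiple of the
Euler field `x`, which acts on `η` as `-1`. -/
theorem exists_along_eq_zero_of_det_jacobian_mul_eq_zero [DecidableEq σ] {x η : σ → K}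
    (hη : ∀ i, along D x (η i) = -η i) {u m : K} (hu : u ≠ 0) (hxu : along D x u = m * u)
    (hm : m ≠ 1) (hdet : (Matrix.of fun i j ↦ D j (u * η i)).det = 0) :
    ∃ w ≠ 0, ∀ i, along D w (η i) = 0 := by
  obtain ⟨v, hv, hJv⟩ := Matrix.exists_mulVec_eq_zero_iff.mpr hdet
  have hv_along (i : σ) : along D v (u * η i) = 0 := by
    rw [along_apply]
    simpa only [Matrix.mulVec, dotProduct, Matrix.of_apply, Pi.zero_apply, mul_comm (D _ _)]
      using congrFun hJv i
  set e : K := along D v u with he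
  have hcorr (y : K) : along D (u • v - e • x) y = u * along D v y - e * along D x y := by
    simp only [along_apply, Pi.sub_apply, Pi.smul_apply, smul_eq_mul, sub_mul, mul_assoc,
      Finset.sum_sub_distrib, Finset.mul_sum]
  refine ⟨u • v - e • x, fun hw ↦ hv ?_, fun i ↦ ?_⟩
  · have hue : u * (1 - m) * e = 0 := by
      have h := hcorr u
      rw [hw, hxu, ← he] at h
      simp only [along_apply, Pi.zero_apply, zero_mul, Finset.sum_const_zero] at h
      linear_combination -h
    have he0 : e = 0 :=
      (mul_eq_zero.mp hue).resolve_left (mul_ne_zero hu (sub_ne_zero.mpr hm.symm))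
    rw [he0, zero_smul, sub_zero] at hw
    exact (smul_eq_zero.mp hw).resolve_left hu
  · have h := hv_along i
    rw [Derivation.leibniz, smul_eq_mul, smul_eq_mul, ← he] at h
    rw [hcorr, hη]
    linear_combination h

variable [Fintype ι]

theorem sum_smul_mul_dlog_along_eq_zero {b : ι → K}
    (h : ∀ i, ∑ t, c t • (b t * dlog (D i) (a t)) = 0) (v : σ → K) :
    ∑ t, c t • (b t * dlog (along D v) (a t)) = 0 := by
  calc ∑ t, c t • (b t * dlog (along D v) (a t))
      = ∑ i, v i * ∑ t, c t • (b t * dlog (D i) (a t)) := by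
        simp only [dlog_along, Finset.mul_sum, Finset.smul_sum]
        rw [Finset.sum_comm]
        refine Finset.sum_congr rfl fun i _ ↦ Finset.sum_congr rfl fun t _ ↦ ?_
        rw [mul_smul_comm, mul_left_comm]
    _ = 0 := by simp only [h, mul_zero, Finset.sum_const_zero]

/-- These sums are, up to sign, the Taylor coefficients of `logForm` along `w`. -/
theorem sum_smul_dlog_along_pow_mul_dlog_eq_zero [CharZero K]
    (haff : ∀ t i j, D j (D i (a t)) = 0) {w : σ → K}
    (hw : ∀ i, along D w (logForm D c a Finset.univ i) = 0) (j : ℕ) (i : σ) :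
    ∑ t, c t • (dlog (along D w) (a t) ^ (j + 1) * dlog (D i) (a t)) = 0 := by
  induction j generalizing i with
  | zero =>
    have h := hw i
    rw [derivation_logForm _ fun t _ ↦ along_derivation_eq_zero (haff t i) w, neg_eq_zero] at h
    simpa only [zero_add, pow_one] using h
  | succ j ih =>
    have hpow : ∑ t, c t • dlog (along D w) (a t) ^ (j + 2) = 0 := by
      simpa only [← pow_succ] using sum_smul_mul_dlog_along_eq_zero ih w
    have hterm (t : ι) : D i (c t • dlog (along D w) (a t) ^ (j + 2)) =
        (j + 2 : K) * (c t • (dlog (along D w) (a t) ^ (j + 1) *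
            dlog (along D fun l ↦ D i (w l)) (a t))
          - c t • (dlog (along D w) (a t) ^ (j + 2) * dlog (D i) (a t))) := by
      rw [Derivation.map_smul, Derivation.leibniz_pow,
        derivation_dlog_along fun l ↦ haff t l i, ← smul_sub, mul_smul_comm]
      simp only [smul_eq_mul, nsmul_eq_mul, Nat.add_succ_sub_one]
      push_cast
      ring_nf
    have hD := congrArg (D i) hpow
    simp only [map_sum, map_zero, hterm, ← Finset.mul_sum, Finset.sum_sub_distrib,
      sum_smul_mul_dlog_along_eq_zero ih, zero_sub] at hD
    exact neg_eq_zero.mp ((mul_eq_zero.mp hD).resolve_left (by exact_mod_cast (j + 1).succ_ne_zero))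

theorem exists_logForm_eq_zero [CharZero K] (haff : ∀ t i j, D j (D i (a t)) = 0) {w : σ → K}
    (hw : ∀ i, along D w (logForm D c a Finset.univ i) = 0) {t₀ : ι}
    (ht₀ : dlog (along D w) (a t₀) ≠ 0) :
    ∃ S : Finset ι, S.Nonempty ∧ ∀ i, logForm D c a S i = 0 := by
  classical
  let s : ι → K := fun t ↦ dlog (along D w) (a t)
  refine ⟨Finset.univ.filter fun t ↦ s t = s t₀, ⟨t₀, by simp⟩, fun i ↦
    sum_filter_eq_zero_of_sum_pow_mul_eq_zero (fun j ↦ ?_) ht₀⟩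
  simpa only [mul_smul_comm] using sum_smul_dlog_along_pow_mul_dlog_eq_zero haff hw j i

theorem det_jacobian_mul_logForm_ne_zero [CharZero K] [DecidableEq σ] {x : σ → K}
    (haff : ∀ t i j, D j (D i (a t)) = 0) (ha : ∀ t, a t ≠ 0)
    (hlin : ∀ t, along D x (a t) = a t) {u m : K} (hu : u ≠ 0) (hxu : along D x u = m * u)
    (hm : m ≠ 1) (hess : ∀ w, (∀ t, along D w (a t) = 0) → w = 0)
    (hpartial : ∀ S : Finset ι, S.Nonempty → ∃ i, logForm D c a S i ≠ 0) :
    (Matrix.of fun i j ↦ D j (u * logForm D c a Finset.univ i)).det ≠ 0 := by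
  intro hdet
  have heuler (i : σ) : along D x (logForm D c a Finset.univ i) = -logForm D c a Finset.univ i := by
    rw [derivation_logForm _ fun t _ ↦ along_derivation_eq_zero (haff t i) x]
    simp only [dlog, hlin, div_self (ha _), one_mul, logForm]
  obtain ⟨w, hw, hwη⟩ := exists_along_eq_zero_of_det_jacobian_mul_eq_zero heuler hu hxu hm hdet
  obtain ⟨t₀, ht₀⟩ : ∃ t, along D w (a t) ≠ 0 := by
    by_contra! h
    exact hw (hess w h)
  obtain ⟨S, hS, hzero⟩ := exists_logForm_eq_zero haff hwη (div_ne_zero ht₀ (ha t₀))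
  obtain ⟨i, hi⟩ := hpartial S hS
  exact hi (hzero i)

end LogForm

section LinearForms

variable {k σ ι : Type*}

theorem irreducible_of_isHomogeneous_one [Field k] {p : MvPolynomial σ k} (hp : p.IsHomogeneous 1)
    (hp0 : p ≠ 0) : Irreducible p := by
  refine irreducible_of_totalDegree_eq_one (hp.totalDegree hp0) fun r hr ↦ ?_
  refine isUnit_iff_ne_zero.mpr ?_
  rintro rfl
  exact hp0 (MvPolynomial.ext _ _ fun m ↦ by simpa using hr m)

theorem pderiv_pderiv_eq_zero_of_isHomogeneous_one [CommSemiring k] {p : MvPolynomial σ k}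
    (hp : p.IsHomogeneous 1) (i j : σ) : pderiv j (pderiv i p) = 0 := by
  have h : (pderiv i p).IsHomogeneous 0 := hp.pderiv
  rw [← totalDegree_zero_iff_isHomogeneous, totalDegree_eq_zero_iff_eq_C] at h
  rw [h, pderiv_C]

theorem exists_eq_smul_of_dvd_of_isHomogeneous [CommRing k] [IsDomain k] {p q : MvPolynomial σ k}
    {d : ℕ} (hp : p.IsHomogeneous d) (hq : q.IsHomogeneous d) (hpq : p ∣ q) :
    ∃ r : k, q = r • p := by
  obtain rfl | hq0 := eq_or_ne q 0
  · exact ⟨0, (zero_smul k p).symm⟩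
  obtain ⟨y, rfl⟩ := hpq
  obtain ⟨hp0, hy0⟩ := mul_ne_zero_iff.mp hq0
  have hdeg := hq.totalDegree hq0
  rw [totalDegree_mul_of_isDomain hp0 hy0, hp.totalDegree hp0] at hdeg
  have hy : y = C (y.coeff 0) := totalDegree_eq_zero_iff_eq_C.mp (by omega)
  exact ⟨y.coeff 0, by rw [smul_eq_C_mul, ← hy, mul_comm]⟩

theorem mem_span_range_of_dvd_prod [Field k] [Fintype ι] {ℓ : ι → MvPolynomial σ k}
    (hℓ : ∀ t, (ℓ t).IsHomogeneous 1) (hℓ0 : ∀ t, ℓ t ≠ 0) {p : MvPolynomial σ k}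
    (hp : p.IsHomogeneous 1) (hp0 : p ≠ 0) (hdvd : p ∣ ∏ t, ℓ t) :
    p ∈ Submodule.span k (Set.range ℓ) := by
  have hirr := irreducible_of_isHomogeneous_one hp hp0
  obtain ⟨t, -, ht⟩ := hirr.prime.exists_mem_finset_dvd hdvd
  have ht' := hirr.dvd_symm (irreducible_of_isHomogeneous_one (hℓ t) (hℓ0 t)) ht
  obtain ⟨r, rfl⟩ := exists_eq_smul_of_dvd_of_isHomogeneous (hℓ t) hp ht'
  exact Submodule.smul_mem _ r (Submodule.subset_span ⟨t, rfl⟩)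

theorem eq_zero_of_isRelPrime_of_wronskian_eq_zero [Field k] [CharZero k] [Finite σ]
    {P Q : MvPolynomial σ k} {d : ℕ} (hP : P.IsHomogeneous d) (hP0 : P ≠ 0)
    (hPQ : IsRelPrime P Q) (hW : ∀ i, P * pderiv i Q = Q * pderiv i P) : d = 0 := by
  by_contra hd
  have hpderiv (i : σ) : pderiv i P = 0 := by
    by_contra hne
    have hdvd : P ∣ pderiv i P := hPQ.dvd_of_dvd_mul_left (Dvd.intro _ (hW i))
    have hle := totalDegree_le_of_dvd_of_isDomain hdvd hne
    rw [hP.totalDegree hP0, hP.pderiv.totalDegree hne] at hle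
    omega
  have := Fintype.ofFinite σ
  have heuler := hP.sum_X_mul_pderiv
  simp [hpderiv, hd, hP0] at heuler

end LinearForms

section FractionField

variable {k σ ι κ : Type*} [Field k]

/-- The partial derivative `∂/∂X i` on the field of rational functions. -/
def fracPderiv (k : Type*) {σ : Type*} [Field k] (i : σ) :
    Derivation k (FractionRing (MvPolynomial σ k)) (FractionRing (MvPolynomial σ k)) :=
  haveI : Algebra.FormallyEtale (MvPolynomial σ k) (FractionRing (MvPolynomial σ k)) :=
    .of_isLocalization (nonZeroDivisors (MvPolynomial σ k))
  extendFormallyEtale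
    ((Algebra.linearMap (MvPolynomial σ k) (FractionRing (MvPolynomial σ k))).compDer (pderiv i))

theorem fracPderiv_algebraMap (i : σ) (p : MvPolynomial σ k) :
    fracPderiv k i (algebraMap _ (FractionRing (MvPolynomial σ k)) p) =
      algebraMap _ _ (pderiv i p) :=
  haveI : Algebra.FormallyEtale (MvPolynomial σ k) (FractionRing (MvPolynomial σ k)) :=
    .of_isLocalization (nonZeroDivisors (MvPolynomial σ k))
  extendFormallyEtale_algebraMap _ p

/-- The coefficient along `X i` of the logarithmic form `dQ / Q - dP / P`, where `P` and `Q` are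
the products of `ℓ (inl t)` and `ℓ (inr t)` over the members of `S`. For `S = univ` it is the form
`dG / G - dF / F` of the pencil of `F = ∏ t, ℓ (inl t)` and `G = ∏ t, ℓ (inr t)`. -/
def pencilLogForm (ℓ : ι ⊕ κ → MvPolynomial σ k) (S : Finset (ι ⊕ κ)) (i : σ) :
    FractionRing (MvPolynomial σ k) :=
  logForm (fracPderiv k) (Sum.elim (fun _ ↦ (-1 : k)) fun _ ↦ 1)
    (fun t ↦ algebraMap (MvPolynomial σ k) _ (ℓ t)) S i

theorem algebraMap_wronskian {ℓ : ι ⊕ κ → MvPolynomial σ k} (hℓ0 : ∀ t, ℓ t ≠ 0)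
    (S : Finset (ι ⊕ κ)) (i : σ) {P Q : MvPolynomial σ k}
    (hP : P = ∏ t ∈ S.toLeft, ℓ (.inl t)) (hQ : Q = ∏ t ∈ S.toRight, ℓ (.inr t)) :
    algebraMap _ (FractionRing (MvPolynomial σ k)) (P * pderiv i Q - Q * pderiv i P) =
      algebraMap _ _ (P * Q) * pencilLogForm ℓ S i := by
  have hinj := IsFractionRing.injective (MvPolynomial σ k) (FractionRing (MvPolynomial σ k))
  have ha (t : ι ⊕ κ) : algebraMap _ (FractionRing (MvPolynomial σ k)) (ℓ t) ≠ 0 :=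
    (map_ne_zero_iff _ hinj).mpr (hℓ0 t)
  have hP0 : algebraMap _ (FractionRing (MvPolynomial σ k)) P ≠ 0 := by
    rw [hP, map_prod]
    exact Finset.prod_ne_zero_iff.mpr fun t _ ↦ ha _
  have hQ0 : algebraMap _ (FractionRing (MvPolynomial σ k)) Q ≠ 0 := by
    rw [hQ, map_prod]
    exact Finset.prod_ne_zero_iff.mpr fun t _ ↦ ha _
  have hlog : pencilLogForm ℓ S i =
      dlog (fracPderiv k i) (algebraMap _ _ Q) - dlog (fracPderiv k i) (algebraMap _ _ P) := by
    rw [hP, hQ, map_prod, map_prod, dlog_prod _ fun t _ ↦ ha _, dlog_prod _ fun t _ ↦ ha _,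
      pencilLogForm, logForm, Finset.sum_sum_eq_sum_toLeft_add_sum_toRight]
    simp only [Sum.elim_inl, Sum.elim_inr, neg_smul, one_smul, Finset.sum_neg_distrib]
    ring
  rw [hlog, dlog, dlog, fracPderiv_algebraMap, fracPderiv_algebraMap, map_sub, map_mul, map_mul,
    map_mul]
  field_simp

theorem exists_pencilLogForm_ne_zero [CharZero k] [Finite σ] [Fintype ι] [Fintype κ]
    {ℓ : ι ⊕ κ → MvPolynomial σ k} (hℓ : ∀ t, (ℓ t).IsHomogeneous 1) (hℓ0 : ∀ t, ℓ t ≠ 0)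
    (hcop : IsRelPrime (∏ t, ℓ (.inl t)) (∏ t, ℓ (.inr t)))
    {S : Finset (ι ⊕ κ)} (hS : S.Nonempty) : ∃ i, pencilLogForm ℓ S i ≠ 0 := by
  by_contra! h
  set P := ∏ t ∈ S.toLeft, ℓ (.inl t) with hP
  set Q := ∏ t ∈ S.toRight, ℓ (.inr t) with hQ
  have hW (i : σ) : P * pderiv i Q = Q * pderiv i P := by
    refine sub_eq_zero.mp (IsFractionRing.injective _ (FractionRing (MvPolynomial σ k)) ?_)
    rw [algebraMap_wronskian hℓ0 S i hP hQ, h, mul_zero, map_zero]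
  have hPQ : IsRelPrime P Q :=
    (hcop.of_dvd_left (Finset.prod_dvd_prod_of_subset _ _ _ (Finset.subset_univ _))).of_dvd_right
      (Finset.prod_dvd_prod_of_subset _ _ _ (Finset.subset_univ _))
  have hleft : S.toLeft.card = 0 :=
    eq_zero_of_isRelPrime_of_wronskian_eq_zero
      (by simpa using IsHomogeneous.prod S.toLeft _ _ fun t _ ↦ hℓ (.inl t))
      (Finset.prod_ne_zero_iff.mpr fun t _ ↦ hℓ0 _) hPQ hW
  have hright : S.toRight.card = 0 :=
    eq_zero_of_isRelPrime_of_wronskian_eq_zero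
      (by simpa using IsHomogeneous.prod S.toRight _ _ fun t _ ↦ hℓ (.inr t))
      (Finset.prod_ne_zero_iff.mpr fun t _ ↦ hℓ0 _) hPQ.symm fun i ↦ (hW i).symm
  have hcard := S.card_toLeft_add_card_toRight
  rw [hleft, hright] at hcard
  exact hS.card_ne_zero hcard.symm

variable [Fintype σ]

theorem along_fracPderiv_X (w : σ → FractionRing (MvPolynomial σ k)) (i : σ) :
    along (fracPderiv k) w (algebraMap _ _ (X i : MvPolynomial σ k)) = w i := by
  classical
  simp [along_apply, fracPderiv_algebraMap, pderiv_X, Pi.single_apply]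

theorem along_X_algebraMap {p : MvPolynomial σ k} {d : ℕ} (hp : p.IsHomogeneous d) :
    along (fracPderiv k) (fun i ↦ algebraMap _ _ (X i : MvPolynomial σ k)) (algebraMap _ _ p) =
      d * algebraMap _ (FractionRing (MvPolynomial σ k)) p := by
  simpa [along_apply, fracPderiv_algebraMap] using
    congrArg (algebraMap _ (FractionRing (MvPolynomial σ k))) hp.sum_X_mul_pderiv

theorem eq_zero_of_along_fracPderiv_eq_zero {ℓ : ι → MvPolynomial σ k}
    (hspan : ∀ i, X i ∈ Submodule.span k (Set.range ℓ))
    {w : σ → FractionRing (MvPolynomial σ k)}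
    (hw : ∀ t, along (fracPderiv k) w (algebraMap _ _ (ℓ t)) = 0) : w = 0 := by
  have halong (p : MvPolynomial σ k) (hp : p ∈ Submodule.span k (Set.range ℓ)) :
      along (fracPderiv k) w (algebraMap _ _ p) = 0 := by
    induction hp using Submodule.span_induction with
    | mem p hp =>
      obtain ⟨t, rfl⟩ := hp
      exact hw t
    | zero => rw [map_zero, map_zero]
    | add p q _ _ hp hq => rw [map_add, map_add, hp, hq, add_zero]
    | smul r p _ hp => rw [algebraMap.smul, Derivation.map_smul, hp, smul_zero]
  exact funext fun i ↦ by rw [← along_fracPderiv_X w i, halong _ (hspan i), Pi.zero_apply]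

theorem det_jacobian_wronskian_ne_zero [CharZero k] [DecidableEq σ] [Fintype ι] [Fintype κ]
    {ℓ : ι ⊕ κ → MvPolynomial σ k} (hℓ : ∀ t, (ℓ t).IsHomogeneous 1) (hℓ0 : ∀ t, ℓ t ≠ 0)
    {F G : MvPolynomial σ k} (hF : F = ∏ t, ℓ (.inl t)) (hG : G = ∏ t, ℓ (.inr t))
    {m : ℕ} (hFG : (F * G).IsHomogeneous m) (hm : m ≠ 1) (hcop : IsRelPrime F G)
    (hspan : ∀ i, X i ∈ Submodule.span k (Set.range ℓ)) :
    (Matrix.of fun i j ↦ pderiv j (F * pderiv i G - G * pderiv i F)).det ≠ 0 := by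
  have hinj := IsFractionRing.injective (MvPolynomial σ k) (FractionRing (MvPolynomial σ k))
  have : CharZero (FractionRing (MvPolynomial σ k)) := charZero_of_injective_algebraMap hinj
  have hFG0 : F * G ≠ 0 := by
    rw [hF, hG]
    exact mul_ne_zero (Finset.prod_ne_zero_iff.mpr fun t _ ↦ hℓ0 _)
      (Finset.prod_ne_zero_iff.mpr fun t _ ↦ hℓ0 _)
  have hdet : (Matrix.of fun i j ↦ fracPderiv k j
      (algebraMap _ _ (F * G) * pencilLogForm ℓ Finset.univ i)).det ≠ 0 :=
    det_jacobian_mul_logForm_ne_zero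
      (fun t i j ↦ by
        rw [fracPderiv_algebraMap, fracPderiv_algebraMap,
          pderiv_pderiv_eq_zero_of_isHomogeneous_one (hℓ t), map_zero])
      (fun t ↦ (map_ne_zero_iff _ hinj).mpr (hℓ0 t))
      (fun t ↦ by rw [along_X_algebraMap (hℓ t), Nat.cast_one, one_mul])
      ((map_ne_zero_iff _ hinj).mpr hFG0) (along_X_algebraMap hFG) (Nat.cast_ne_one.mpr hm)
      (fun _ ↦ eq_zero_of_along_fracPderiv_eq_zero hspan)
      (fun _ ↦ exists_pencilLogForm_ne_zero hℓ hℓ0 (hF ▸ hG ▸ hcop))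
  have hwronskian (i : σ) : algebraMap _ _ (F * G) * pencilLogForm ℓ Finset.univ i =
      algebraMap _ _ (F * pderiv i G - G * pderiv i F) :=
    (algebraMap_wronskian hℓ0 _ i (by rwa [Finset.toLeft_univ])
      (by rwa [Finset.toRight_univ])).symm
  simp only [hwronskian, fracPderiv_algebraMap] at hdet
  intro h
  have hmap := congrArg (algebraMap _ (FractionRing (MvPolynomial σ k))) h
  rw [RingHom.map_det, map_zero] at hmap
  exact hdet hmap

end FractionField

theorem gauss_map_nondegenerate_two_fibers_general {k σ : Type*} [Field k] [CharZero k]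
    [Fintype σ] [DecidableEq σ] {d e : ℕ} {F G : MvPolynomial σ k}
    (hF : F.IsHomogeneous d) (hG : G.IsHomogeneous e) (hde : d + e ≠ 1)
    (hFcr : ∃ s : Multiset (MvPolynomial σ k),
      (∀ α ∈ s, α ≠ 0 ∧ α.IsHomogeneous 1) ∧ F = s.prod)
    (hGcr : ∃ s : Multiset (MvPolynomial σ k),
      (∀ α ∈ s, α ≠ 0 ∧ α.IsHomogeneous 1) ∧ G = s.prod)
    (hcop : IsRelPrime F G)
    (hess : ∀ i, X i ∈
      Submodule.span k {α | (α ≠ 0 ∧ α.IsHomogeneous 1) ∧ (α ∣ F ∨ α ∣ G)}) :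
    (Matrix.of fun i j ↦ pderiv j (F * pderiv i G - G * pderiv i F)).det ≠ 0 := by
  classical
  obtain ⟨s, hs, hFs⟩ := hFcr
  obtain ⟨t, ht, hGt⟩ := hGcr
  rw [Multiset.prod_eq_prod_coe] at hFs hGt
  let ℓ : s ⊕ t → MvPolynomial σ k := Sum.elim (fun α ↦ α.1) fun α ↦ α.1
  have hℓ : ∀ α, ℓ α ≠ 0 ∧ (ℓ α).IsHomogeneous 1 :=
    Sum.rec (fun α ↦ hs _ Multiset.coe_mem) fun α ↦ ht _ Multiset.coe_mem
  have hprod : F * G = ∏ α, ℓ α := by rw [Fintype.prod_sum_type, hFs, hGt]; rfl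
  refine det_jacobian_wronskian_ne_zero (fun α ↦ (hℓ α).2) (fun α ↦ (hℓ α).1) hFs hGt
    (hF.mul hG) hde hcop fun i ↦ Submodule.span_le.mpr ?_ (hess i)
  rintro α ⟨⟨hα0, hα⟩, hdvd⟩
  exact mem_span_range_of_dvd_prod (fun α ↦ (hℓ α).2) (fun α ↦ (hℓ α).1) hα hα0
    (hprod ▸ hdvd.elim (·.mul_right G) (·.mul_left F))

/-- Theorem (generalized Gauss map): for an essential pencil on ℙⁿ with irreducible
generic fiber, two completely reducible fibers F and G, and a third fiber that is a
product of linear forms and non-reduced polynomials, the Gauss map of the associated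
foliation (defined by ω₀ = F dG - G dF) is non-degenerate: the Jacobian determinant
of the coefficients bᵢ = F·∂ᵢG - G·∂ᵢF is not the zero polynomial. -/
theorem gauss_map_nondegenerate_two_fibers
    (n d : ℕ) (hn : 2 ≤ n) (hd : 1 ≤ d)
    (F G : MvPolynomial (Fin (n + 1)) ℂ)
    (hF : F.IsHomogeneous d) (hG : G.IsHomogeneous d)
    (hFcr : CompletelyReducible n F) (hGcr : CompletelyReducible n G)
    (hcop : RelPrime n F G)
    (hgen : GenericFiberIrreducible n F G)
    -- the pencil is essential
    (hess : ∀ i : Fin (n + 1),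
      X i ∈ Submodule.span ℂ
        {α : MvPolynomial (Fin (n + 1)) ℂ | IsLinearForm n α ∧ (α ∣ F ∨ α ∣ G)})
    -- a member K = aF + bG distinct from F and G, a product of linear forms and
    -- non-reduced polynomials
    (a b : ℂ) (ha : a ≠ 0) (hb : b ≠ 0)
    (K : MvPolynomial (Fin (n + 1)) ℂ)
    (hK : K = C a * F + C b * G)
    (r s : ℕ)
    (ℓ : Fin r → MvPolynomial (Fin (n + 1)) ℂ)
    (hℓ : ∀ i, IsLinearForm n (ℓ i))
    (g : Fin s → MvPolynomial (Fin (n + 1)) ℂ)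
    (hgirr : ∀ j, Irreducible (g j))
    (dg : Fin s → ℕ) (hghom : ∀ j, (g j).IsHomogeneous (dg j))
    (e : Fin s → ℕ) (he : ∀ j, 2 ≤ e j)
    (hKfact : K = (∏ i, ℓ i) * ∏ j, g j ^ e j) :
    (Matrix.of fun i j =>
      pderiv j (F * pderiv i G - G * pderiv i F)).det ≠ 0 := by
  exact gauss_map_nondegenerate_two_fibers_general hF hG (by omega) hFcr hGcr
    (fun p hpF hpG ↦ hcop p hpF hpG) hess
end
end

section
/- Let n ≥ 2 and let F, G be coprime completely reducible homogeneous polynomials of the same degree d ≥ 1 in R = MvPolynomial (Fin (n+1)) ℂ such that: the generic fiber of the pencil 𝒫 generated by F and G is irreducible; the pencil is essential (the linear factors of F together with those of G span the full (n+1)-dimensional space of degree-1 forms); and there exists a member K = aF + bG of 𝒫, distinct from F and from G, of the form K = (∏_{i=1}^r ℓ_i)·(∏_{j=1}^s g_j^{e_j}) with ℓ_i linear forms, g_j irreducible homogeneous polynomials of degree at least 2, and e_j ≥ 2 for all j. Then n ≤ 6. -/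
/-!
Let `ω = F dG - G dF`, and let `J` be the Jacobian matrix of its coefficients. Its determinant has
degree `(n + 1) (2d - 2)`. Replacing two generators of the pencil by two others multiplies `ω` by a
nonzero constant, so `det J` may be analysed at each of the fibers `F`, `G` and `K` separately.

* Along a linear form `h` with `h ^ m ∣ F`, the matrix `J` is `h ^ m` times a matrix plus a matrix
  of rank at most two, so `(h ^ m) ^ (n - 1)` divides `det J`. Hence `F ^ (n - 1)` and `G ^ (n - 1)`
  divide it.
* Along `h` of any degree with `h ^ (m + 1) ∣ K`, all coefficients of `ω` are divisible by `h ^ m`,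
  and Euler's identity shows that `(h ^ m) ^ (n + 1)` divides `det J`. Since a nonlinear `h` occurs
  in `K` with multiplicity at least two, `K ^ (n + 1)` divides `(det J) ^ 2`.
* Up to a perturbation of rank one which only contributes a nonzero scalar factor, `J` is `-F G`
  times the Hessian matrix of `log (F / G)`. If a vector `v` is in the kernel of this Hessian,
  differentiating repeatedly gives `∑ ± (Dᵥ fᵢ / fᵢ) ^ m • d fᵢ / fᵢ = 0` for all `m ≥ 1`, the sum
  being over the linear factors `fᵢ` of `F` and `G`. Separating the values of `Dᵥ fᵢ / fᵢ`, a
  nonempty subproduct `P / Q` of `F / G` is constant unless all these values vanish; the former is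
  excluded by coprimality, and in an essential pencil the latter means `v = 0`. So `det J ≠ 0`.

Comparing degrees, `4 d (n - 1) + d (n + 1) ≤ 2 (n + 1) (2d - 2)`, that is, `n < 7`.
-/

open MvPolynomial

noncomputable section

open Matrix

section LinearAlgebra

variable {K κ ι : Type*} [CommRing K] [Fintype κ] [DecidableEq κ]

theorem det_smul_one_add_vecMulVec [Nonempty κ] {c t : K} {x y : κ → K} (h : x ⬝ᵥ y = t * c) :
    (c • (1 : Matrix κ κ K) + vecMulVec x y).det = c ^ Fintype.card κ * (1 + t) := by
  have hchar : c • (1 : Matrix κ κ K) + vecMulVec x y = scalar κ c - vecMulVec (-x) y := by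
    rw [neg_vecMulVec, sub_neg_eq_add, scalar_apply, smul_one_eq_diagonal]
  rw [hchar, ← eval_charpoly, charpoly_vecMulVec, neg_dotProduct, h]
  obtain ⟨m, hm⟩ := Nat.exists_eq_add_one.2 (Fintype.card_pos (α := κ))
  simp only [hm, Polynomial.eval_sub, Polynomial.eval_pow, Polynomial.eval_X,
    Polynomial.eval_smul, smul_eq_mul, Nat.add_sub_cancel]
  ring

theorem det_smul_add_vecMulVec_mulVec [Nonempty κ] (A : Matrix κ κ K) {c t : K} {x y : κ → K}
    (h : x ⬝ᵥ y = t * c) :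
    (c • A + vecMulVec (A *ᵥ x) y).det = A.det * (c ^ Fintype.card κ * (1 + t)) := by
  rw [← det_smul_one_add_vecMulVec h, ← det_mul, mul_add, mul_vecMulVec, Matrix.mul_smul,
    Matrix.mul_one]

theorem pow_dvd_det_smul_add_mul [IsDomain K] [Fintype ι] {t : K} (ht : t ≠ 0)
    (M : Matrix κ κ K) (U : Matrix κ ι K) (V : Matrix ι κ K) :
    t ^ (Fintype.card κ - Fintype.card ι) ∣ (t • M + U * V).det := by
  classical
  rcases le_total (Fintype.card κ) (Fintype.card ι) with hle | hle
  · simp [Nat.sub_eq_zero_of_le hle]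
  have hblocks : fromBlocks 1 (-V) U (t • M) * fromBlocks (t • 1) 0 0 1 =
      fromBlocks 1 0 0 (t • 1) * fromBlocks (t • 1) (-V) U M := by
    simp [fromBlocks_multiply]
  have hdet := congrArg det hblocks
  rw [det_mul, det_mul, det_fromBlocks_zero₂₁, det_fromBlocks_zero₂₁, det_fromBlocks_one₁₁,
    Matrix.mul_neg, sub_neg_eq_add] at hdet
  simp only [det_smul, det_one, mul_one, one_mul] at hdet
  refine ⟨(fromBlocks (t • 1) (-V) U M).det, mul_right_cancel₀ (pow_ne_zero (Fintype.card ι) ht) ?_⟩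
  rw [hdet, mul_right_comm, ← pow_add, Nat.sub_add_cancel hle]

end LinearAlgebra

section LogarithmicHessian

theorem sum_filter_eq_zero_of_power_sums {K ι : Type*} [Field K] [DecidableEq K] [Fintype ι]
    {x a : ι → K} (h : ∀ m : ℕ, ∑ i, a i * x i ^ (m + 1) = 0) {μ : K} (hμ : μ ≠ 0) :
    ∑ i with x i = μ, a i = 0 := by
  have hpoly (p : Polynomial K) : ∑ i, a i * (x i * p.eval (x i)) = 0 := by
    simp only [Polynomial.eval_eq_sum_range, Finset.mul_sum]
    rw [Finset.sum_comm]
    refine Finset.sum_eq_zero fun m _ => ?_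
    calc ∑ i, a i * (x i * (p.coeff m * x i ^ m)) = p.coeff m * ∑ i, a i * x i ^ (m + 1) := by
          rw [Finset.mul_sum]
          exact Finset.sum_congr rfl fun i _ => by ring
      _ = 0 := by rw [h, mul_zero]
  let nodes : Finset K := insert μ (Finset.univ.image x)
  have hbasis (i : ι) : (Lagrange.basis nodes id μ).eval (x i) = if x i = μ then 1 else 0 := by
    split_ifs with hi
    · exact hi ▸ Lagrange.eval_basis_self Function.injective_id.injOn (by simp [nodes, hi])
    · exact Lagrange.eval_basis_of_ne (v := id) (Ne.symm hi) (by simp [nodes])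
  have hzero : μ * ∑ i with x i = μ, a i = 0 := by
    rw [← hpoly (Lagrange.basis nodes id μ), Finset.mul_sum, Finset.sum_filter]
    refine Finset.sum_congr rfl fun i _ => ?_
    rw [hbasis]
    split_ifs with hi
    · rw [hi]; ring
    · ring
  exact (mul_eq_zero.1 hzero).resolve_left hμ

variable {k K ι κ : Type*} [CommRing k] [Field K] [Algebra k K] [Fintype κ]
  {D : κ → Derivation k K K} {E : Matrix ι κ K}

theorem derivation_mulVec (hE : ∀ i j w, D w (E i j) = -(E i j * E i w)) (v : κ → K) (i : ι)
    (w : κ) :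
    D w ((E *ᵥ v) i) = (E *ᵥ fun l => D w (v l)) i - (E *ᵥ v) i * E i w := by
  simp only [mulVec, dotProduct, map_sum, Derivation.leibniz, hE, smul_eq_mul, Finset.sum_mul,
    ← Finset.sum_sub_distrib]
  exact Finset.sum_congr rfl fun l _ => by ring

variable [Fintype ι] [CharZero K] {c : ι → K}

theorem vecMul_mulVec_pow_succ_eq_zero (hE : ∀ i j w, D w (E i j) = -(E i j * E i w))
    (hc : ∀ i w, D w (c i) = 0) {v : κ → K} {m : ℕ}
    (h : (fun i => c i * (E *ᵥ v) i ^ (m + 1)) ᵥ* E = 0) :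
    (fun i => c i * (E *ᵥ v) i ^ (m + 2)) ᵥ* E = 0 := by
  set x := E *ᵥ v
  ext w
  let x' := E *ᵥ fun l => D w (v l)
  have hterm (i : ι) (j : κ) : D w (c i * x i ^ (m + 1) * E i j) =
      (m + 1) * (c i * x i ^ m * x' i) * E i j -
        (m + 2) * (c i * x i ^ (m + 1) * E i w) * E i j := by
    rw [Derivation.leibniz, Derivation.leibniz, Derivation.leibniz_pow, hc, hE,
      derivation_mulVec hE]
    simp only [smul_eq_mul, nsmul_eq_mul, Nat.add_sub_cancel]
    push_cast
    ring
  have hderiv : ((fun i => (m + 1) * (c i * x i ^ m * x' i)) -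
      fun i => (m + 2) * (c i * x i ^ (m + 1) * E i w)) ᵥ* E = 0 := by
    ext j
    have := congrArg (D w) (congrFun h j)
    simp only [vecMul, dotProduct, map_sum, hterm, Pi.zero_apply, map_zero] at this
    simpa only [vecMul, dotProduct, Pi.sub_apply, Pi.zero_apply, sub_mul] using this
  have hpair : ∑ i, ((m + 1) * (c i * x i ^ m * x' i) -
      (m + 2) * (c i * x i ^ (m + 1) * E i w)) * x i = 0 := by
    have := congrArg (· ⬝ᵥ v) hderiv
    rwa [← dotProduct_mulVec, zero_dotProduct] at this
  -- Pairing the hypothesis itself with `D w v` eliminates the derivatives of `v`.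
  have hfirst : ∑ i, c i * x i ^ (m + 1) * x' i = 0 := by
    have := congrArg (· ⬝ᵥ fun l => D w (v l)) h
    rwa [← dotProduct_mulVec, zero_dotProduct] at this
  have hsum : ((m : K) + 2) * ∑ i, c i * x i ^ (m + 2) * E i w = 0 := by
    calc ((m : K) + 2) * ∑ i, c i * x i ^ (m + 2) * E i w
        = (m + 1) * ∑ i, c i * x i ^ (m + 1) * x' i - ∑ i, ((m + 1) * (c i * x i ^ m * x' i) -
          (m + 2) * (c i * x i ^ (m + 1) * E i w)) * x i := by
          rw [Finset.mul_sum, Finset.mul_sum, ← Finset.sum_sub_distrib]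
          exact Finset.sum_congr rfl fun i _ => by ring
      _ = 0 := by rw [hfirst, hpair, mul_zero, sub_zero]
  have hm : (m : K) + 2 ≠ 0 := by exact_mod_cast Nat.succ_ne_zero (m + 1)
  exact (mul_eq_zero.1 hsum).resolve_left hm

theorem vecMul_mulVec_pow_eq_zero (hE : ∀ i j w, D w (E i j) = -(E i j * E i w))
    (hc : ∀ i w, D w (c i) = 0) {v : κ → K} (hv : (fun i => c i * (E *ᵥ v) i) ᵥ* E = 0) (m : ℕ) :
    (fun i => c i * (E *ᵥ v) i ^ (m + 1)) ᵥ* E = 0 := by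
  induction m with
  | zero => simpa using hv
  | succ m ih => exact vecMul_mulVec_pow_succ_eq_zero hE hc ih

theorem det_transpose_mul_diagonal_mul_ne_zero [DecidableEq ι] [DecidableEq κ]
    (hE : ∀ i j w, D w (E i j) = -(E i j * E i w)) (hc : ∀ i w, D w (c i) = 0)
    (hker : ∀ v, E *ᵥ v = 0 → v = 0)
    (hsub : ∀ s : Finset ι, (∀ j, ∑ i ∈ s, c i * E i j = 0) → s = ∅) :
    (Eᵀ * diagonal c * E).det ≠ 0 := by
  classical
  intro hdet
  obtain ⟨v, hv0, hv⟩ := exists_mulVec_eq_zero_iff.2 hdet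
  have hdiag : diagonal c *ᵥ E *ᵥ v = fun i => c i * (E *ᵥ v) i :=
    funext fun i => mulVec_diagonal c _ i
  rw [← mulVec_mulVec, ← mulVec_mulVec, mulVec_transpose, hdiag] at hv
  have hpow := vecMul_mulVec_pow_eq_zero hE hc hv
  obtain ⟨i₀, hi₀⟩ := Function.ne_iff.1 fun h => hv0 (hker v h)
  -- The rows on which `E *ᵥ v` takes a given nonzero value satisfy a relation of their own.
  have hclass : Finset.univ.filter (fun i => (E *ᵥ v) i = (E *ᵥ v) i₀) = ∅ := by
    refine hsub _ fun j => sum_filter_eq_zero_of_power_sums (fun m => ?_) hi₀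
    calc ∑ i, c i * E i j * (E *ᵥ v) i ^ (m + 1)
        = ((fun i => c i * (E *ᵥ v) i ^ (m + 1)) ᵥ* E) j :=
          Finset.sum_congr rfl fun i _ => by ring
      _ = 0 := congrFun (hpow m) j
  exact Finset.notMem_empty i₀ (hclass ▸ by simp)

end LogarithmicHessian

section Algebra

theorem exists_derivation_extension {A R K : Type*} [CommRing A] [CommRing R] [Field K]
    [Algebra A R] [Algebra A K] [Algebra R K] [IsScalarTower A R K] [IsFractionRing R K]
    (d : Derivation A R R) :
    ∃ D : Derivation A K K, ∀ p, D (algebraMap R K p) = algebraMap R K (d p) := by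
  have : Algebra.FormallyEtale R K := .of_isLocalization (nonZeroDivisors R)
  let δ : Derivation A R K := (Algebra.linearMap R K).compDer d
  let φ := (δ.liftKaehlerDifferential.liftBaseChange K).comp
    (KaehlerDifferential.tensorKaehlerEquivOfFormallyEtale A R K).symm.toLinearMap
  refine ⟨φ.compDer (KaehlerDifferential.D A K), fun p => ?_⟩
  simp [φ, δ, KaehlerDifferential.tensorKaehlerEquivOfFormallyEtale_symm_D_algebraMap]

theorem pow_dvd_of_forall_irreducible {R : Type*} [CommRing R] [IsDomain R]
    [UniqueFactorizationMonoid R] {a b : R} (ha : a ≠ 0) (N : ℕ)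
    (h : ∀ p, Irreducible p → p ∣ a → ∀ m, p ^ m ∣ a → (p ^ m) ^ N ∣ b) : a ^ N ∣ b := by
  rw [UniqueFactorizationMonoid.dvd_iff_emultiplicity_le (pow_ne_zero N ha)]
  intro p hp
  have hfin : FiniteMultiplicity p a := .of_not_isUnit hp.not_isUnit ha
  rw [emultiplicity_pow hp, hfin.emultiplicity_eq_multiplicity]
  by_cases hpa : p ∣ a
  · have := le_emultiplicity_of_pow_dvd
      ((pow_mul p _ N).symm ▸ h p hp.irreducible hpa _ (pow_multiplicity_dvd p a))
    rw [mul_comm] at this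
    exact_mod_cast this
  · simp [multiplicity_eq_zero.2 hpa]

end Algebra

section HomogeneousDivisors

theorem order_coe_le_totalDegree {σ R : Type*} [CommSemiring R] {p : MvPolynomial σ R}
    (hp : p ≠ 0) : (p : MvPowerSeries σ R).order ≤ p.totalDegree := by
  obtain ⟨u, hu⟩ := support_nonempty.2 hp
  calc (p : MvPowerSeries σ R).order ≤ u.degree :=
        MvPowerSeries.order_le (by rwa [coeff_coe, ← mem_support_iff])
    _ ≤ p.totalDegree := by exact_mod_cast le_totalDegree hu

theorem isHomogeneous_totalDegree_iff {σ R : Type*} [CommSemiring R] {p : MvPolynomial σ R}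
    (hp : p ≠ 0) :
    p.IsHomogeneous p.totalDegree ↔ (p : MvPowerSeries σ R).order = p.totalDegree := by
  refine ⟨fun h => (order_coe_le_totalDegree hp).antisymm <| MvPowerSeries.le_order fun u hu => ?_,
    fun h u hu => ?_⟩
  · rw [coeff_coe, h.coeff_eq_zero (by exact_mod_cast hu.ne)]
  · have hle : u.degree ≤ p.totalDegree := le_totalDegree (mem_support_iff.2 hu)
    have hge := MvPowerSeries.order_le (f := (p : MvPowerSeries σ R)) (by rwa [coeff_coe])
    rw [h] at hge
    exact (DFunLike.congr_fun Finsupp.degree_eq_weight_one u).symm.trans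
      (hle.antisymm (by exact_mod_cast hge))

variable {σ R : Type*} [CommRing R] [IsDomain R] {p q : MvPolynomial σ R} {m n : ℕ}

theorem isHomogeneous_totalDegree_of_dvd (hq : q.IsHomogeneous n) (hq0 : q ≠ 0) (h : p ∣ q) :
    p.IsHomogeneous p.totalDegree := by
  obtain ⟨r, rfl⟩ := h
  have hp0 := left_ne_zero_of_mul hq0
  have hr0 := right_ne_zero_of_mul hq0
  have hsum := (isHomogeneous_totalDegree_iff hq0).1 (hq.totalDegree hq0 ▸ hq)
  rw [coe_mul, MvPowerSeries.order_mul, totalDegree_mul_of_isDomain hp0 hr0, Nat.cast_add] at hsum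
  have hp := order_coe_le_totalDegree hp0
  refine (isHomogeneous_totalDegree_iff hp0).2 (hp.antisymm ?_)
  refine (ENat.add_le_add_iff_right (ENat.natCast_ne_top r.totalDegree)).1 ?_
  rw [← hsum]
  gcongr
  exact order_coe_le_totalDegree hr0

theorem isHomogeneous_of_mul_right (hq : q.IsHomogeneous m) (hq0 : q ≠ 0)
    (h : (q * p).IsHomogeneous n) : p.IsHomogeneous (n - m) := by
  rcases eq_or_ne p 0 with rfl | hp0
  · exact isHomogeneous_zero _ _ _
  have hdeg : p.totalDegree = n - m := by
    have := h.totalDegree (mul_ne_zero hq0 hp0)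
    rw [totalDegree_mul_of_isDomain hq0 hp0, hq.totalDegree hq0] at this
    omega
  exact hdeg ▸ isHomogeneous_totalDegree_of_dvd h (mul_ne_zero hq0 hp0) ⟨q, mul_comm q p⟩

end HomogeneousDivisors

section LinearForms

/-- Products of linear forms over an arbitrary commutative semiring and in an arbitrary set of
variables. Over `ℂ` in the variables `x₀, …, xₙ` this is `CompletelyReducible n`. -/
def IsProductOfLinearForms {σ k : Type*} [CommSemiring k] (P : MvPolynomial σ k) : Prop :=
  ∃ s : Multiset (MvPolynomial σ k), (∀ α ∈ s, α ≠ 0 ∧ α.IsHomogeneous 1) ∧ P = s.prod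

variable {σ k : Type*} [Field k] {α p P : MvPolynomial σ k}

theorem irreducible_of_isHomogeneous_one_s14 (hα : α.IsHomogeneous 1) (hα0 : α ≠ 0) :
    Irreducible α := by
  refine irreducible_of_totalDegree_eq_one (hα.totalDegree hα0) fun c hc => ?_
  obtain ⟨u, hu⟩ := support_nonempty.2 hα0
  exact (ne_zero_of_dvd_ne_zero (mem_support_iff.1 hu) (hc u)).isUnit

theorem exists_eq_C_mul_of_associated (h : Associated p α) : ∃ c : k, p = C c * α := by
  obtain ⟨u, hu⟩ := h.symm
  obtain ⟨c, -, hc⟩ := isUnit_iff_eq_C_of_isReduced.1 u.isUnit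
  exact ⟨c, by rw [← hu, hc, mul_comm]⟩

theorem exists_eq_C_mul_of_dvd_prod {ι : Type*} [Fintype ι] {f : ι → MvPolynomial σ k}
    (hf : ∀ i, f i ≠ 0 ∧ (f i).IsHomogeneous 1) (hp : Irreducible p) (h : p ∣ ∏ i, f i) :
    ∃ i, ∃ c : k, p = C c * f i := by
  obtain ⟨i, -, hdvd⟩ := hp.prime.exists_mem_finset_dvd h
  have hirr := irreducible_of_isHomogeneous_one_s14 (hf i).2 (hf i).1
  exact ⟨i, exists_eq_C_mul_of_associated (hp.associated_of_dvd hirr hdvd)⟩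

theorem IsProductOfLinearForms.exists_eq_prod (hP : IsProductOfLinearForms P) :
    ∃ (n : ℕ) (f : Fin n → MvPolynomial σ k),
      (∀ i, f i ≠ 0 ∧ (f i).IsHomogeneous 1) ∧ P = ∏ i, f i := by
  obtain ⟨s, hs, rfl⟩ := hP
  exact ⟨_, s.toList.get, fun i => hs _ (Multiset.mem_toList.1 (List.get_mem _ i)),
    by rw [← List.prod_ofFn, List.ofFn_get, Multiset.prod_toList]⟩

theorem IsProductOfLinearForms.isHomogeneous_one_of_dvd (hP : IsProductOfLinearForms P)
    (hp : Irreducible p) (h : p ∣ P) : p.IsHomogeneous 1 := by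
  obtain ⟨n, f, hf, rfl⟩ := hP.exists_eq_prod
  obtain ⟨i, c, rfl⟩ := exists_eq_C_mul_of_dvd_prod hf hp h
  exact (hf i).2.C_mul c

theorem IsProductOfLinearForms.ne_zero (hP : IsProductOfLinearForms P) : P ≠ 0 := by
  obtain ⟨s, hs, rfl⟩ := hP
  exact Multiset.prod_ne_zero fun h => (hs 0 h).1 rfl

theorem isHomogeneous_one_or_sq_dvd_of_dvd_prod_mul_prod_pow {ι κ : Type*} [Fintype ι] [Fintype κ]
    {ℓ : ι → MvPolynomial σ k} {g : κ → MvPolynomial σ k} {e : κ → ℕ}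
    (hℓ : ∀ i, ℓ i ≠ 0 ∧ (ℓ i).IsHomogeneous 1) (he : ∀ j, 2 ≤ e j)
    (hp : Irreducible p) (h : p ∣ (∏ i, ℓ i) * ∏ j, g j ^ e j) :
    p.IsHomogeneous 1 ∨ p ^ 2 ∣ (∏ i, ℓ i) * ∏ j, g j ^ e j := by
  rcases hp.prime.dvd_or_dvd h with h | h
  · obtain ⟨i, c, rfl⟩ := exists_eq_C_mul_of_dvd_prod hℓ hp h
    exact .inl ((hℓ i).2.C_mul c)
  · obtain ⟨j, hj, hdvd⟩ := hp.prime.exists_mem_finset_dvd h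
    refine .inr (Dvd.dvd.mul_left ?_ _)
    calc p ^ 2 ∣ g j ^ 2 := pow_dvd_pow_of_dvd (hp.prime.dvd_of_dvd_pow hdvd) 2
      _ ∣ g j ^ e j := pow_dvd_pow _ (he j)
      _ ∣ ∏ j, g j ^ e j := Finset.dvd_prod_of_mem _ hj

theorem pderiv_pderiv_of_isHomogeneous_one (hα : α.IsHomogeneous 1) (i j : σ) :
    pderiv j (pderiv i α) = 0 := by
  rw [totalDegree_eq_zero_iff_eq_C.1 ((totalDegree_zero_iff_isHomogeneous _).2 hα.pderiv),
    pderiv_C]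

end LinearForms

theorem totalDegree_ne_zero_of_irreducible {σ k : Type*} [Field k] {p : MvPolynomial σ k}
    (hp : Irreducible p) : p.totalDegree ≠ 0 := fun h => hp.not_isUnit <|
  isUnit_iff_totalDegree_of_isReduced.2 ⟨(show coeff 0 p ≠ 0 from fun h0 => hp.ne_zero <| by
    rw [totalDegree_eq_zero_iff_eq_C.1 h, h0, C_0]).isUnit, h⟩

section PencilJacobian

variable {σ k : Type*}

section CommRing

variable [CommRing k] {P Q : MvPolynomial σ k} {d : ℕ}

/-- The coefficients of the one-form `P dQ - Q dP`, which up to a scalar depends only on the pencil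
generated by `P` and `Q`. -/
def pencilForm (P Q : MvPolynomial σ k) (i : σ) : MvPolynomial σ k :=
  P * pderiv i Q - Q * pderiv i P

/-- The Jacobian matrix of `pencilForm P Q`. -/
def pencilJacobian (P Q : MvPolynomial σ k) : Matrix σ σ (MvPolynomial σ k) :=
  of fun i j => pderiv j (pencilForm P Q i)

theorem pencilForm_member_left (a b : k) (i : σ) :
    pencilForm (C a * P + C b * Q) P i = -b • pencilForm P Q i := by
  simp only [pencilForm, map_add, Derivation.leibniz, pderiv_C, smul_eq_mul, mul_zero, add_zero,
    smul_eq_C_mul, map_neg]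
  ring

theorem pencilForm_mul_left (q u : MvPolynomial σ k) (i : σ) :
    pencilForm (q * u) Q i = q * pencilForm u Q i - u * Q * pderiv i q := by
  simp only [pencilForm, Derivation.leibniz, smul_eq_mul]
  ring

theorem isHomogeneous_pencilForm (hP : P.IsHomogeneous d) (hQ : Q.IsHomogeneous d) (i : σ) :
    (pencilForm P Q i).IsHomogeneous (2 * d - 1) := by
  have hdeg : d + (d - 1) = 2 * d - 1 := by omega
  exact hdeg ▸ (hP.mul hQ.pderiv).sub (hQ.mul hP.pderiv)

variable [Fintype σ] [DecidableEq σ]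

theorem det_pencilJacobian_member_left (a b : k) :
    (pencilJacobian (C a * P + C b * Q) P).det =
      C ((-b) ^ Fintype.card σ) * (pencilJacobian P Q).det := by
  have hsmul : pencilJacobian (C a * P + C b * Q) P =
      (C (-b) : MvPolynomial σ k) • pencilJacobian P Q := by
    ext1 i j
    simp only [pencilJacobian, of_apply, pencilForm_member_left, pderiv_C_mul, Matrix.smul_apply,
      smul_eq_C_mul, smul_eq_mul]
  rw [hsmul, det_smul, C_pow]

theorem isHomogeneous_det_pencilJacobian (hP : P.IsHomogeneous d) (hQ : Q.IsHomogeneous d) :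
    (pencilJacobian P Q).det.IsHomogeneous (Fintype.card σ * (2 * d - 2)) := by
  rw [det_apply']
  refine .sum _ _ _ fun τ _ => ?_
  have hprod := IsHomogeneous.prod Finset.univ (fun i => pencilJacobian P Q (τ i) i) _
    fun i _ => (isHomogeneous_pencilForm hP hQ (τ i)).pderiv (i := i)
  rw [Finset.sum_const, Finset.card_univ, smul_eq_mul, Nat.sub_sub] at hprod
  simpa using hprod.C_mul ((Equiv.Perm.sign τ : ℤ) : k)

end CommRing

section Field

variable [Fintype σ] [DecidableEq σ] [Field k] {P Q h q : MvPolynomial σ k} {d m ε : ℕ}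

theorem associated_det_pencilJacobian_member_left {a b : k} (hb : b ≠ 0) :
    Associated (pencilJacobian (C a * P + C b * Q) P).det (pencilJacobian P Q).det := by
  rw [det_pencilJacobian_member_left]
  exact associated_unit_mul_left _ _ (((neg_ne_zero.2 hb).isUnit.pow _).map C)

theorem pow_dvd_det_pencilJacobian_of_isHomogeneous_one (hh : h.IsHomogeneous 1) (hh0 : h ≠ 0)
    (hP : h ^ m ∣ P) : (h ^ m) ^ (Fintype.card σ - 2) ∣ (pencilJacobian P Q).det := by
  obtain ⟨u, rfl⟩ := hP
  let c := u * Q * (m * h ^ (m - 1))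
  let U : Matrix σ (Fin 2) (MvPolynomial σ k) := of fun i => ![pencilForm u Q i, -pderiv i h]
  let V : Matrix (Fin 2) σ (MvPolynomial σ k) :=
    of ![fun j => pderiv j (h ^ m), fun j => pderiv j c]
  have hform (i : σ) : pencilForm (h ^ m * u) Q i = h ^ m * pencilForm u Q i - c * pderiv i h := by
    rw [pencilForm_mul_left, pderiv_pow]
    ring
  have hJ : pencilJacobian (h ^ m * u) Q = h ^ m • pencilJacobian u Q + U * V := by
    ext1 i j
    have hVc : U i 0 * V 0 j + U i 1 * V 1 j =
      pencilForm u Q i * pderiv j (h ^ m) + -pderiv i h * pderiv j c := rfl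
    rw [Matrix.add_apply, Matrix.mul_apply, Fin.sum_univ_two, hVc]
    simp only [pencilJacobian, of_apply, hform, map_sub, Derivation.leibniz, smul_eq_mul,
      pderiv_pderiv_of_isHomogeneous_one hh, Matrix.smul_apply]
    ring
  rw [hJ]
  exact pow_dvd_det_smul_add_mul (pow_ne_zero m hh0) _ U V

theorem pow_dvd_det_pencilJacobian (hP : IsProductOfLinearForms P) :
    P ^ (Fintype.card σ - 2) ∣ (pencilJacobian P Q).det :=
  pow_dvd_of_forall_irreducible hP.ne_zero _ fun _ hp hdvd _ hpow =>
    pow_dvd_det_pencilJacobian_of_isHomogeneous_one (hP.isHomogeneous_one_of_dvd hp hdvd)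
      hp.ne_zero hpow

variable [CharZero k]

theorem pow_card_dvd_det_pderiv_mul {a : σ → MvPolynomial σ k} (hq : q.IsHomogeneous m)
    (ha : ∀ i, (a i).IsHomogeneous ε) (hε : ε ≠ 0) :
    q ^ Fintype.card σ ∣ (of fun i j => pderiv j (q * a i)).det := by
  rcases isEmpty_or_nonempty σ with _ | _
  · simp
  let A : Matrix σ σ (MvPolynomial σ k) := of fun i j => pderiv j (a i)
  let x : σ → MvPolynomial σ k := fun i => C (ε : k)⁻¹ * X i
  have hAx : A *ᵥ x = a := by
    ext1 i
    calc (A *ᵥ x) i = C (ε : k)⁻¹ * ∑ j, X j * pderiv j (a i) := by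
          rw [Finset.mul_sum]
          exact Finset.sum_congr rfl fun j _ => by simp only [A, x, of_apply]; ring
      _ = a i := by
          rw [(ha i).sum_X_mul_pderiv, nsmul_eq_mul, ← mul_assoc, ← C_eq_coe_nat, ← C_mul,
            inv_mul_cancel₀ (Nat.cast_ne_zero.2 hε), C_1, one_mul]
  have hxq : x ⬝ᵥ (fun j => pderiv j q) = C ((ε : k)⁻¹ * m) * q := by
    calc x ⬝ᵥ (fun j => pderiv j q) = C (ε : k)⁻¹ * ∑ j, X j * pderiv j q := by
          rw [Finset.mul_sum]
          exact Finset.sum_congr rfl fun j _ => by simp only [x]; ring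
      _ = C ((ε : k)⁻¹ * m) * q := by
          rw [hq.sum_X_mul_pderiv, nsmul_eq_mul, ← mul_assoc, ← C_eq_coe_nat, ← C_mul]
  have hM : (of fun i j => pderiv j (q * a i)) =
      q • A + vecMulVec (A *ᵥ x) (fun j => pderiv j q) := by
    ext1 i j
    simp only [hAx, A, of_apply, Derivation.leibniz, smul_eq_mul, Matrix.add_apply,
      Matrix.smul_apply, vecMulVec_apply]
  rw [hM, det_smul_add_vecMulVec_mulVec A hxq]
  exact (Dvd.intro _ rfl).mul_left _

theorem pow_pow_card_dvd_det_pencilJacobian (hP : P.IsHomogeneous d) (hQ : Q.IsHomogeneous d)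
    (hP0 : P ≠ 0) (hh : h.IsHomogeneous ε) (hε : ε ≠ 0) (hdvd : h ^ (m + 1) ∣ P) :
    (h ^ m) ^ Fintype.card σ ∣ (pencilJacobian P Q).det := by
  obtain ⟨u, rfl⟩ := hdvd
  have hdeg : ε * m + ε ≤ d := by
    have := totalDegree_le_of_dvd_of_isDomain (Dvd.intro u rfl) hP0
    rwa [hP.totalDegree hP0, (hh.pow _).totalDegree (left_ne_zero_of_mul hP0)] at this
  let a (i : σ) := h * pencilForm u Q i - u * Q * ((m + 1) * pderiv i h)
  have hform (i : σ) : pencilForm (h ^ (m + 1) * u) Q i = h ^ m * a i := by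
    rw [pencilForm_mul_left, pderiv_pow]
    simp only [a, Nat.add_sub_cancel]
    push_cast
    ring
  have ha (i : σ) : (a i).IsHomogeneous (2 * d - 1 - ε * m) :=
    isHomogeneous_of_mul_right (hh.pow m) (pow_ne_zero m fun h0 => hP0 (by simp [h0]))
      (hform i ▸ isHomogeneous_pencilForm hP hQ i)
  simpa only [pencilJacobian, hform] using
    pow_card_dvd_det_pderiv_mul (hh.pow m) ha (by omega)

theorem pow_card_dvd_det_pencilJacobian_sq (hP : P.IsHomogeneous d) (hQ : Q.IsHomogeneous d)
    (hirr : ∀ p, Irreducible p → p ∣ P → p.IsHomogeneous 1 ∨ p ^ 2 ∣ P)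
    (hcard : 4 ≤ Fintype.card σ) :
    P ^ Fintype.card σ ∣ (pencilJacobian P Q).det ^ 2 := by
  rcases eq_or_ne P 0 with rfl | hP0
  · have : Nonempty σ := Fintype.card_pos_iff.1 (by omega)
    have hzero : pencilJacobian 0 Q = 0 := by ext1; simp [pencilJacobian, pencilForm]
    simp [hzero]
  refine pow_dvd_of_forall_irreducible hP0 _ fun p hp hpP m hpow => ?_
  rcases hirr p hp hpP with hlin | hsq
  · have hdet := pow_dvd_det_pencilJacobian_of_isHomogeneous_one (Q := Q) hlin hp.ne_zero hpow
    calc (p ^ m) ^ Fintype.card σ ∣ (p ^ m) ^ ((Fintype.card σ - 2) * 2) :=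
          pow_dvd_pow _ (by omega)
      _ = ((p ^ m) ^ (Fintype.card σ - 2)) ^ 2 := pow_mul _ _ _
      _ ∣ _ := pow_dvd_pow_of_dvd hdet 2
  · have hhom := isHomogeneous_totalDegree_of_dvd hP hP0 hpP
    have hdeg : p.totalDegree ≠ 0 := totalDegree_ne_zero_of_irreducible hp
    obtain ⟨l, hl, hlP⟩ : ∃ l, m ≤ 2 * l ∧ p ^ (l + 1) ∣ P := by
      rcases le_total m 2 with hm | hm
      · exact ⟨1, by omega, hsq⟩
      · exact ⟨m - 1, by omega, by rwa [Nat.sub_add_cancel (by omega)]⟩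
    have hdet := pow_pow_card_dvd_det_pencilJacobian hP hQ hP0 hhom hdeg hlP
    calc (p ^ m) ^ Fintype.card σ ∣ (p ^ (2 * l)) ^ Fintype.card σ :=
          pow_dvd_pow_of_dvd (pow_dvd_pow p hl) _
      _ = ((p ^ l) ^ Fintype.card σ) ^ 2 := by ring
      _ ∣ _ := pow_dvd_pow_of_dvd hdet 2

end Field

end PencilJacobian

section Nondegeneracy

section Coprime

variable {σ k : Type*} [Finite σ] [Field k] [CharZero k] {P Q : MvPolynomial σ k} {m n : ℕ}

theorem eq_zero_of_dvd_pderiv (hP : P.IsHomogeneous n) (hP0 : P ≠ 0) (h : ∀ j, P ∣ pderiv j P) :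
    n = 0 := by
  cases nonempty_fintype σ
  by_contra hn
  have hzero (j : σ) : pderiv j P = 0 := by
    by_contra hj
    have := totalDegree_le_of_dvd_of_isDomain (h j) hj
    rw [hP.totalDegree hP0, (hP.pderiv (i := j)).totalDegree hj] at this
    omega
  have heuler := hP.sum_X_mul_pderiv
  simp only [hzero, mul_zero, Finset.sum_const_zero] at heuler
  exact (smul_ne_zero hn hP0) heuler.symm

theorem degrees_eq_zero_of_pencilForm_eq_zero (hPQ : IsRelPrime P Q) (hP : P.IsHomogeneous m)
    (hQ : Q.IsHomogeneous n) (hP0 : P ≠ 0) (hQ0 : Q ≠ 0)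
    (h : ∀ j, pencilForm P Q j = 0) : m = 0 ∧ n = 0 :=
  ⟨eq_zero_of_dvd_pderiv hP hP0 fun j => hPQ.dvd_of_dvd_mul_left ⟨_, (sub_eq_zero.1 (h j)).symm⟩,
    eq_zero_of_dvd_pderiv hQ hQ0 fun j => hPQ.symm.dvd_of_dvd_mul_left ⟨_, sub_eq_zero.1 (h j)⟩⟩

end Coprime

section LogDeriv

variable {σ k ι : Type*} [Field k] (L : Type*) [Field L] [Algebra (MvPolynomial σ k) L]

/-- The matrix of the logarithmic derivatives `∂ⱼyᵢ / yᵢ` of a family of polynomials `yᵢ`, in a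
field `L` containing the polynomial ring. -/
def logDerivMatrix (y : ι → MvPolynomial σ k) : Matrix ι σ L :=
  of fun i j => algebraMap _ L (pderiv j (y i)) / algebraMap _ L (y i)

variable [FaithfulSMul (MvPolynomial σ k) L] {y : ι → MvPolynomial σ k}

theorem sum_logDerivMatrix (hy : ∀ i, y i ≠ 0) (s : Finset ι) (j : σ) :
    ∑ i ∈ s, logDerivMatrix L y i j =
      algebraMap _ L (pderiv j (∏ i ∈ s, y i)) / algebraMap _ L (∏ i ∈ s, y i) := by
  classical
  induction s using Finset.induction_on with
  | empty => simp
  | insert i s his ih =>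
    have hi : algebraMap _ L (y i) ≠ 0 := by simpa using hy i
    have hs : algebraMap _ L (∏ i ∈ s, y i) ≠ 0 := by
      simpa [Finset.prod_eq_zero_iff] using fun i _ => hy i
    rw [Finset.sum_insert his, Finset.prod_insert his, ih, logDerivMatrix, of_apply,
      Derivation.leibniz]
    simp only [smul_eq_mul, map_add, map_mul]
    field_simp
    ring

theorem derivation_logDerivMatrix (hy : ∀ i, y i ≠ 0 ∧ (y i).IsHomogeneous 1)
    [Algebra k L] {D : σ → Derivation k L L}
    (hD : ∀ j (p : MvPolynomial σ k), D j (algebraMap _ L p) = algebraMap _ L (pderiv j p))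
    (i : ι) (j w : σ) : D w (logDerivMatrix L y i j) =
      -(logDerivMatrix L y i j * logDerivMatrix L y i w) := by
  have hi : algebraMap _ L (y i) ≠ 0 := by simpa using (hy i).1
  simp only [logDerivMatrix, of_apply, Derivation.leibniz_div, hD,
    pderiv_pderiv_of_isHomogeneous_one (hy i).2, map_zero, smul_eq_mul, mul_zero, zero_sub]
  field_simp

variable [Fintype σ]

theorem logDerivMatrix_mulVec_X (hy : ∀ i, y i ≠ 0 ∧ (y i).IsHomogeneous 1) :
    logDerivMatrix L y *ᵥ (fun j => algebraMap (MvPolynomial σ k) L (X j)) = 1 := by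
  ext i
  have hi : algebraMap _ L (y i) ≠ 0 := by simpa using (hy i).1
  have heuler := congrArg (algebraMap _ L) (hy i).2.sum_X_mul_pderiv
  simp only [map_sum, map_mul, one_smul] at heuler
  simp only [mulVec, dotProduct, logDerivMatrix, of_apply, Pi.one_apply, div_mul_eq_mul_div]
  rw [← Finset.sum_div, div_eq_one_iff_eq hi, ← heuler]
  exact Finset.sum_congr rfl fun j _ => mul_comm _ _

theorem eq_zero_of_logDerivMatrix_mulVec_eq_zero (hy : ∀ i, y i ≠ 0)
    (hspan : ∀ j, X j ∈ Submodule.span k (Set.range y)) {v : σ → L}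
    (hv : logDerivMatrix L y *ᵥ v = 0) : v = 0 := by
  classical
  have hvanish (p : MvPolynomial σ k) (hp : p ∈ Submodule.span k (Set.range y)) :
      ∑ j, algebraMap _ L (pderiv j p) * v j = 0 := by
    induction hp using Submodule.span_induction with
    | zero => simp
    | add p q _ _ hp hq => simp only [map_add, add_mul, Finset.sum_add_distrib, hp, hq, add_zero]
    | smul a p _ hp =>
      simp only [smul_eq_C_mul, pderiv_C_mul, map_mul, mul_assoc, ← Finset.mul_sum, hp, mul_zero]
    | mem p hp =>
      obtain ⟨i, rfl⟩ := hp
      have hi : algebraMap _ L (y i) ≠ 0 := by simpa using hy i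
      have := congrFun hv i
      simp only [mulVec, dotProduct, logDerivMatrix, of_apply, Pi.zero_apply,
        div_mul_eq_mul_div, ← Finset.sum_div, div_eq_zero_iff, hi, or_false] at this
      exact this
  ext l
  simpa [pderiv_X, Pi.single_apply] using hvanish _ (hspan l)

end LogDeriv

section Sum

variable {σ k ι κ : Type*} [Field k]
  (L : Type*) [Field L] [Algebra (MvPolynomial σ k) L] [FaithfulSMul (MvPolynomial σ k) L]
  {f : ι → MvPolynomial σ k} {g : κ → MvPolynomial σ k}

theorem mul_signed_sum_logDerivMatrix (hf : ∀ i, f i ≠ 0) (hg : ∀ i, g i ≠ 0)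
    (s : Finset (ι ⊕ κ)) (j : σ) :
    algebraMap _ L ((∏ i ∈ s.toLeft, f i) * ∏ i ∈ s.toRight, g i) *
        ∑ i ∈ s, (Sum.elim 1 (-1) : ι ⊕ κ → L) i * logDerivMatrix L (Sum.elim f g) i j =
      -algebraMap _ L (pencilForm (∏ i ∈ s.toLeft, f i) (∏ i ∈ s.toRight, g i) j) := by
  have hf0 : algebraMap _ L (∏ i ∈ s.toLeft, f i) ≠ 0 := by
    simpa [Finset.prod_eq_zero_iff] using fun i _ => hf i
  have hg0 : algebraMap _ L (∏ i ∈ s.toRight, g i) ≠ 0 := by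
    simpa [Finset.prod_eq_zero_iff] using fun i _ => hg i
  have hsum : ∑ i ∈ s, (Sum.elim 1 (-1) : ι ⊕ κ → L) i * logDerivMatrix L (Sum.elim f g) i j =
      ∑ i ∈ s.toLeft, logDerivMatrix L f i j - ∑ i ∈ s.toRight, logDerivMatrix L g i j := by
    rw [Finset.sum_sum_eq_sum_toLeft_add_sum_toRight, sub_eq_add_neg, ← Finset.sum_neg_distrib]
    simp [logDerivMatrix]
  rw [hsum, sum_logDerivMatrix L hf, sum_logDerivMatrix L hg, pencilForm]
  simp only [map_sub, map_mul]
  field_simp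
  ring

variable [CharZero k] [Finite σ] [Fintype ι] [Fintype κ]

theorem eq_empty_of_signed_sum_logDerivMatrix_eq_zero
    (hf : ∀ i, f i ≠ 0 ∧ (f i).IsHomogeneous 1) (hg : ∀ i, g i ≠ 0 ∧ (g i).IsHomogeneous 1)
    (hcop : IsRelPrime (∏ i, f i) (∏ i, g i)) (s : Finset (ι ⊕ κ))
    (hs : ∀ j, ∑ i ∈ s, (Sum.elim 1 (-1) : ι ⊕ κ → L) i *
      logDerivMatrix L (Sum.elim f g) i j = 0) : s = ∅ := by
  have hform (j : σ) : pencilForm (∏ i ∈ s.toLeft, f i) (∏ i ∈ s.toRight, g i) j = 0 := by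
    have := mul_signed_sum_logDerivMatrix L (fun i => (hf i).1) (fun i => (hg i).1) s j
    rwa [hs, mul_zero, zero_eq_neg, FaithfulSMul.algebraMap_eq_zero_iff] at this
  have hP : (∏ i ∈ s.toLeft, f i).IsHomogeneous s.toLeft.card := by
    simpa using IsHomogeneous.prod s.toLeft f (fun _ => 1) fun i _ => (hf i).2
  have hQ : (∏ i ∈ s.toRight, g i).IsHomogeneous s.toRight.card := by
    simpa using IsHomogeneous.prod s.toRight g (fun _ => 1) fun i _ => (hg i).2
  have hPQ : IsRelPrime (∏ i ∈ s.toLeft, f i) (∏ i ∈ s.toRight, g i) :=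
    (hcop.of_dvd_left (Finset.prod_dvd_prod_of_subset _ _ _ (Finset.subset_univ _))).of_dvd_right
      (Finset.prod_dvd_prod_of_subset _ _ _ (Finset.subset_univ _))
  obtain ⟨hleft, hright⟩ := degrees_eq_zero_of_pencilForm_eq_zero hPQ hP hQ
    (Finset.prod_ne_zero_iff.2 fun i _ => (hf i).1)
    (Finset.prod_ne_zero_iff.2 fun i _ => (hg i).1) hform
  rw [← Finset.card_eq_zero, ← Finset.card_toLeft_add_card_toRight, hleft, hright]

end Sum

section Hessian

variable {σ k ι κ L : Type*} [Field k] [Fintype ι] [DecidableEq ι] [Fintype κ] [DecidableEq κ]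
  [Field L] [Algebra (MvPolynomial σ k) L] {f : ι → MvPolynomial σ k} {g : κ → MvPolynomial σ k}

variable (L) in
/-- Minus the Hessian matrix of `log (∏ f / ∏ g)`, for families of linear forms `f` and `g`. -/
def negLogHessian (f : ι → MvPolynomial σ k) (g : κ → MvPolynomial σ k) : Matrix σ σ L :=
  (logDerivMatrix L (Sum.elim f g))ᵀ * diagonal (Sum.elim 1 (-1) : ι ⊕ κ → L) *
    logDerivMatrix L (Sum.elim f g)

theorem negLogHessian_apply (i j : σ) :
    negLogHessian L f g i j = ∑ l, (Sum.elim 1 (-1) : ι ⊕ κ → L) l *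
      logDerivMatrix L (Sum.elim f g) l i * logDerivMatrix L (Sum.elim f g) l j := by
  rw [negLogHessian, Matrix.mul_apply]
  simp only [mul_diagonal, transpose_apply]
  exact Finset.sum_congr rfl fun l _ => by ring

variable [FaithfulSMul (MvPolynomial σ k) L]

theorem negLogHessian_mulVec_X [Fintype σ] (hf : ∀ i, f i ≠ 0 ∧ (f i).IsHomogeneous 1)
    (hg : ∀ i, g i ≠ 0 ∧ (g i).IsHomogeneous 1) (i : σ) :
    (negLogHessian L f g *ᵥ fun j => algebraMap (MvPolynomial σ k) L (X j)) i =
      ∑ l, (Sum.elim 1 (-1) : ι ⊕ κ → L) l * logDerivMatrix L (Sum.elim f g) l i := by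
  rw [negLogHessian, ← mulVec_mulVec, logDerivMatrix_mulVec_X L (Sum.rec hf hg)]
  simp only [mulVec, dotProduct, mul_diagonal, transpose_apply, Pi.one_apply, mul_one]
  exact Finset.sum_congr rfl fun l _ => mul_comm _ _

variable [Algebra k L] {D : σ → Derivation k L L}

theorem derivation_signed_sum_logDerivMatrix
    (hD : ∀ j (p : MvPolynomial σ k), D j (algebraMap _ L p) = algebraMap _ L (pderiv j p))
    (hf : ∀ i, f i ≠ 0 ∧ (f i).IsHomogeneous 1) (hg : ∀ i, g i ≠ 0 ∧ (g i).IsHomogeneous 1)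
    (i j : σ) :
    D j (∑ l, (Sum.elim 1 (-1) : ι ⊕ κ → L) l * logDerivMatrix L (Sum.elim f g) l i) =
      -negLogHessian L f g i j := by
  have hsign (l : ι ⊕ κ) : D j ((Sum.elim 1 (-1) : ι ⊕ κ → L) l) = 0 := by cases l <;> simp
  rw [negLogHessian_apply, map_sum, ← Finset.sum_neg_distrib]
  refine Finset.sum_congr rfl fun l _ => ?_
  rw [Derivation.leibniz, hsign, derivation_logDerivMatrix L (Sum.rec hf hg) hD]
  simp only [smul_eq_mul]
  ring

variable [Fintype σ]

theorem mapMatrix_pencilJacobian_prod [DecidableEq σ]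
    (hD : ∀ j (p : MvPolynomial σ k), D j (algebraMap _ L p) = algebraMap _ L (pderiv j p))
    (hf : ∀ i, f i ≠ 0 ∧ (f i).IsHomogeneous 1) (hg : ∀ i, g i ≠ 0 ∧ (g i).IsHomogeneous 1) :
    (algebraMap (MvPolynomial σ k) L).mapMatrix (pencilJacobian (∏ i, f i) (∏ i, g i)) =
      algebraMap _ L ((∏ i, f i) * ∏ i, g i) • negLogHessian L f g +
        vecMulVec (negLogHessian L f g *ᵥ -fun j => algebraMap (MvPolynomial σ k) L (X j))
          (fun j => algebraMap _ L (pderiv j ((∏ i, f i) * ∏ i, g i))) := by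
  ext i j
  have hform : algebraMap _ L (pencilForm (∏ i, f i) (∏ i, g i) i) =
      -(algebraMap _ L ((∏ i, f i) * ∏ i, g i) *
        ∑ l, (Sum.elim 1 (-1) : ι ⊕ κ → L) l * logDerivMatrix L (Sum.elim f g) l i) := by
    rw [eq_neg_iff_add_eq_zero, add_comm, ← eq_neg_iff_add_eq_zero]
    simpa using mul_signed_sum_logDerivMatrix L (fun i => (hf i).1) (fun i => (hg i).1)
      Finset.univ i
  have hderiv := congrArg (D j) hform
  rw [hD, map_neg, Derivation.leibniz, derivation_signed_sum_logDerivMatrix hD hf hg, hD] at hderiv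
  rw [RingHom.mapMatrix_apply, map_apply, pencilJacobian, of_apply, hderiv, mulVec_neg,
    Matrix.add_apply, Matrix.smul_apply, vecMulVec_apply, Pi.neg_apply,
    negLogHessian_mulVec_X hf hg]
  simp only [smul_eq_mul]
  ring

variable [CharZero k]

theorem det_negLogHessian_ne_zero [DecidableEq σ]
    (hD : ∀ j (p : MvPolynomial σ k), D j (algebraMap _ L p) = algebraMap _ L (pderiv j p))
    (hf : ∀ i, f i ≠ 0 ∧ (f i).IsHomogeneous 1) (hg : ∀ i, g i ≠ 0 ∧ (g i).IsHomogeneous 1)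
    (hcop : IsRelPrime (∏ i, f i) (∏ i, g i))
    (hspan : ∀ j, X j ∈ Submodule.span k (Set.range (Sum.elim f g))) :
    (negLogHessian L f g).det ≠ 0 := by
  have : CharZero L :=
    charZero_of_injective_algebraMap (FaithfulSMul.algebraMap_injective (MvPolynomial σ k) L)
  have hy : ∀ i, Sum.elim f g i ≠ 0 ∧ (Sum.elim f g i).IsHomogeneous 1 := Sum.rec hf hg
  refine det_transpose_mul_diagonal_mul_ne_zero (derivation_logDerivMatrix L hy hD)
    (fun l w => ?_)
    (fun v => eq_zero_of_logDerivMatrix_mulVec_eq_zero L (fun i => (hy i).1) hspan)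
    (eq_empty_of_signed_sum_logDerivMatrix_eq_zero L hf hg hcop)
  cases l <;> simp

end Hessian

section Determinant

variable {σ k : Type*} [Fintype σ] [DecidableEq σ] [Field k] [CharZero k]

theorem det_pencilJacobian_prod_ne_zero {ι κ : Type*} [Fintype ι] [Fintype κ]
    {f : ι → MvPolynomial σ k} {g : κ → MvPolynomial σ k}
    (hf : ∀ i, f i ≠ 0 ∧ (f i).IsHomogeneous 1) (hg : ∀ i, g i ≠ 0 ∧ (g i).IsHomogeneous 1)
    (hcop : IsRelPrime (∏ i, f i) (∏ i, g i))
    (hspan : ∀ j, X j ∈ Submodule.span k (Set.range (Sum.elim f g)))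
    (hcard : Fintype.card ι + Fintype.card κ ≠ 1) :
    (pencilJacobian (∏ i, f i) (∏ i, g i)).det ≠ 0 := by
  classical
  rcases isEmpty_or_nonempty σ with _ | _
  · simp
  let L := FractionRing (MvPolynomial σ k)
  choose D hD using fun j : σ => exists_derivation_extension (K := L) (pderiv (R := k) j)
  set P := (∏ i, f i) * ∏ i, g i
  have hP0 : algebraMap _ L P ≠ 0 := by
    rw [Ne, FaithfulSMul.algebraMap_eq_zero_iff]
    exact mul_ne_zero (Finset.prod_ne_zero_iff.2 fun i _ => (hf i).1)
      (Finset.prod_ne_zero_iff.2 fun i _ => (hg i).1)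
  have heuler : (-fun j => algebraMap (MvPolynomial σ k) L (X j)) ⬝ᵥ
      (fun j => algebraMap _ L (pderiv j P)) =
        -(Fintype.card ι + Fintype.card κ : L) * algebraMap _ L P := by
    have hhom : P.IsHomogeneous (Fintype.card ι + Fintype.card κ) := by
      simpa using (IsHomogeneous.prod Finset.univ f (fun _ => 1) fun i _ => (hf i).2).mul
        (IsHomogeneous.prod Finset.univ g (fun _ => 1) fun i _ => (hg i).2)
    have := congrArg (algebraMap _ L) hhom.sum_X_mul_pderiv
    simp only [map_sum, map_mul, nsmul_eq_mul, Nat.cast_add, map_add, map_natCast] at this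
    rw [neg_dotProduct, dotProduct, this, neg_mul]
  have hdet : algebraMap _ L (pencilJacobian (∏ i, f i) (∏ i, g i)).det ≠ 0 := by
    rw [RingHom.map_det, mapMatrix_pencilJacobian_prod hD hf hg,
      det_smul_add_vecMulVec_mulVec _ heuler]
    have hscalar : (1 : L) + -(Fintype.card ι + Fintype.card κ : L) ≠ 0 := by
      rw [← sub_eq_add_neg, sub_ne_zero]
      exact_mod_cast hcard.symm
    exact mul_ne_zero (det_negLogHessian_ne_zero hD hf hg hcop hspan)
      (mul_ne_zero (pow_ne_zero _ hP0) hscalar)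
  exact fun h => hdet (by rw [h, map_zero])

theorem det_pencilJacobian_ne_zero {d : ℕ} {F G : MvPolynomial σ k}
    (hF : F.IsHomogeneous d) (hG : G.IsHomogeneous d)
    (hFl : IsProductOfLinearForms F) (hGl : IsProductOfLinearForms G) (hcop : IsRelPrime F G)
    (hess : ∀ i, X i ∈ Submodule.span k {α | (α ≠ 0 ∧ α.IsHomogeneous 1) ∧ (α ∣ F ∨ α ∣ G)}) :
    (pencilJacobian F G).det ≠ 0 := by
  obtain ⟨m, f, hf, rfl⟩ := hFl.exists_eq_prod
  obtain ⟨n, g, hg, rfl⟩ := hGl.exists_eq_prod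
  have hm : m = d := by
    have := IsHomogeneous.prod Finset.univ f (fun _ => 1) fun i _ => (hf i).2
    simpa using this.inj_right hF hFl.ne_zero
  have hn : n = d := by
    have := IsHomogeneous.prod Finset.univ g (fun _ => 1) fun i _ => (hg i).2
    simpa using this.inj_right hG hGl.ne_zero
  refine det_pencilJacobian_prod_ne_zero hf hg hcop (fun i => ?_) (by simp; omega)
  refine Submodule.span_le.2 ?_ (hess i)
  rintro α ⟨⟨hα0, hα⟩, hdvd⟩
  have hirr := irreducible_of_isHomogeneous_one_s14 hα hα0
  rcases hdvd with hdvd | hdvd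
  · obtain ⟨l, c, rfl⟩ := exists_eq_C_mul_of_dvd_prod hf hirr hdvd
    exact C_mul' (a := c) (p := f l) ▸ Submodule.smul_mem _ c (Submodule.subset_span ⟨.inl l, rfl⟩)
  · obtain ⟨l, c, rfl⟩ := exists_eq_C_mul_of_dvd_prod hg hirr hdvd
    exact C_mul' (a := c) (p := g l) ▸ Submodule.smul_mem _ c (Submodule.subset_span ⟨.inr l, rfl⟩)

end Determinant

end Nondegeneracy

section DimensionBound

variable {σ k : Type*} [Field k] {d : ℕ} {F G : MvPolynomial σ k} {a b : k}

theorem pos_of_X_mem_span_linear_divisors (hF : F.IsHomogeneous d) (hG : G.IsHomogeneous d)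
    (hF0 : F ≠ 0) (hG0 : G ≠ 0) {i : σ}
    (hi : X i ∈ Submodule.span k {α | (α ≠ 0 ∧ α.IsHomogeneous 1) ∧ (α ∣ F ∨ α ∣ G)}) : 0 < d := by
  by_contra hd
  have hdeg {α P : MvPolynomial σ k} (hα : α ≠ 0 ∧ α.IsHomogeneous 1) (hP : P.IsHomogeneous d)
      (hP0 : P ≠ 0) : ¬ α ∣ P := fun h => by
    have := totalDegree_le_of_dvd_of_isDomain h hP0
    rw [hα.2.totalDegree hα.1, hP.totalDegree hP0] at this
    omega
  have hempty : {α | (α ≠ 0 ∧ α.IsHomogeneous 1) ∧ (α ∣ F ∨ α ∣ G)} = ∅ :=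
    Set.eq_empty_of_forall_notMem fun α ⟨hα, h⟩ => h.elim (hdeg hα hF hF0) (hdeg hα hG hG0)
  rw [hempty, Submodule.span_empty, Submodule.mem_bot] at hi
  exact X_ne_zero i hi

variable [Fintype σ]

theorem mul_pow_dvd_det_pencilJacobian [DecidableEq σ] (hFl : IsProductOfLinearForms F)
    (hGl : IsProductOfLinearForms G) (hcop : IsRelPrime F G) :
    (F * G) ^ (Fintype.card σ - 2) ∣ (pencilJacobian F G).det := by
  have hG : G ^ (Fintype.card σ - 2) ∣ (pencilJacobian F G).det := by
    have := associated_det_pencilJacobian_member_left (P := F) (Q := G) (a := 0) one_ne_zero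
    rw [C_0, zero_mul, zero_add, C_1, one_mul] at this
    exact (pow_dvd_det_pencilJacobian hGl).trans this.dvd
  rw [mul_pow]
  exact hcop.pow.mul_dvd (pow_dvd_det_pencilJacobian hFl) hG

variable [CharZero k]

theorem mul_member_pow_dvd_det_pencilJacobian_sq [DecidableEq σ]
    (hF : F.IsHomogeneous d) (hG : G.IsHomogeneous d)
    (hFl : IsProductOfLinearForms F) (hGl : IsProductOfLinearForms G) (hcop : IsRelPrime F G)
    (ha : a ≠ 0) (hb : b ≠ 0)
    (hK : ∀ p, Irreducible p → p ∣ C a * F + C b * G →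
      p.IsHomogeneous 1 ∨ p ^ 2 ∣ C a * F + C b * G) (hcard : 4 ≤ Fintype.card σ) :
    ((F * G) ^ (Fintype.card σ - 2)) ^ 2 * (C a * F + C b * G) ^ Fintype.card σ ∣
      (pencilJacobian F G).det ^ 2 := by
  have hFK : IsRelPrime F (C a * F + C b * G) := by
    rw [IsRelPrime.mul_add_right_right_iff]
    exact (isRelPrime_mul_unit_left_right (hb.isUnit.map C)).2 hcop
  have hGK : IsRelPrime G (C a * F + C b * G) := by
    rw [IsRelPrime.add_mul_right_right_iff]
    exact (isRelPrime_mul_unit_left_right (ha.isUnit.map C)).2 hcop.symm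
  refine (((hFK.mul_left hGK).pow_left.pow_left).pow_right).mul_dvd
    (pow_dvd_pow_of_dvd (mul_pow_dvd_det_pencilJacobian hFl hGl hcop) 2) ?_
  exact (pow_card_dvd_det_pencilJacobian_sq ((hF.C_mul a).add (hG.C_mul b)) hF hK hcard).trans
    ((associated_det_pencilJacobian_member_left hb).pow_pow (n := 2)).dvd

theorem essential_pencil_dimension_bound_general
    (hF : F.IsHomogeneous d) (hG : G.IsHomogeneous d)
    (hFl : IsProductOfLinearForms F) (hGl : IsProductOfLinearForms G) (hcop : IsRelPrime F G)
    (hess : ∀ i, X i ∈ Submodule.span k {α | (α ≠ 0 ∧ α.IsHomogeneous 1) ∧ (α ∣ F ∨ α ∣ G)})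
    (ha : a ≠ 0) (hb : b ≠ 0)
    (hK : ∀ p, Irreducible p → p ∣ C a * F + C b * G →
      p.IsHomogeneous 1 ∨ p ^ 2 ∣ C a * F + C b * G) :
    Fintype.card σ ≤ 7 := by
  classical
  by_contra! hcard
  obtain ⟨i⟩ : Nonempty σ := Fintype.card_pos_iff.1 (by omega)
  have hd := pos_of_X_mem_span_linear_divisors hF hG hFl.ne_zero hGl.ne_zero (hess i)
  have hdet := pow_ne_zero 2 (det_pencilJacobian_ne_zero hF hG hFl hGl hcop hess)
  have hdvd := mul_member_pow_dvd_det_pencilJacobian_sq hF hG hFl hGl hcop ha hb hK (by omega)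
  have hhom := (((hF.mul hG).pow (Fintype.card σ - 2)).pow 2).mul
    (((hF.C_mul a).add (hG.C_mul b)).pow (Fintype.card σ))
  have hdeg := totalDegree_le_of_dvd_of_isDomain hdvd hdet
  rw [hhom.totalDegree (ne_zero_of_dvd_ne_zero hdet hdvd),
    ((isHomogeneous_det_pencilJacobian hF hG).pow 2).totalDegree hdet] at hdeg
  -- With `M = card σ`, the inequality `2 * (2 * d * (M - 2)) + d * M ≤ 2 * (M * (2 * d - 2))`
  -- amounts to `d * M + 4 * M ≤ 8 * d`.
  obtain ⟨N, hN⟩ := Nat.exists_eq_add_of_le' hcard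
  obtain ⟨e, rfl⟩ := Nat.exists_eq_add_of_le' hd
  simp only [hN, show N + 8 - 2 = N + 6 by omega, show 2 * (e + 1) - 2 = 2 * e by omega] at hdeg
  nlinarith

end DimensionBound

/-- An essential pencil on ℙⁿ with irreducible generic fiber, two completely reducible
fibers, and a further fiber that is a product of linear forms and non-trivial powers of
irreducible polynomials of degree at least two can exist only for n ≤ 6. -/
theorem essential_pencil_dimension_bound
    (n d : ℕ) (hn : 2 ≤ n) (hd : 1 ≤ d)
    (F G : MvPolynomial (Fin (n + 1)) ℂ)
    (hF : F.IsHomogeneous d) (hG : G.IsHomogeneous d)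
    (hFcr : CompletelyReducible n F) (hGcr : CompletelyReducible n G)
    (hcop : RelPrime n F G)
    (hgen : GenericFiberIrreducible n F G)
    -- the pencil is essential
    (hess : ∀ i : Fin (n + 1),
      X i ∈ Submodule.span ℂ
        {α : MvPolynomial (Fin (n + 1)) ℂ | IsLinearForm n α ∧ (α ∣ F ∨ α ∣ G)})
    -- a member K = aF + bG distinct from F and G, a product of linear forms and
    -- non-trivial powers of irreducible polynomials of degree at least two
    (a b : ℂ) (ha : a ≠ 0) (hb : b ≠ 0)
    (K : MvPolynomial (Fin (n + 1)) ℂ)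
    (hK : K = C a * F + C b * G)
    (r s : ℕ)
    (ℓ : Fin r → MvPolynomial (Fin (n + 1)) ℂ)
    (hℓ : ∀ i, IsLinearForm n (ℓ i))
    (g : Fin s → MvPolynomial (Fin (n + 1)) ℂ)
    (hgirr : ∀ j, Irreducible (g j))
    (dg : Fin s → ℕ) (hdg : ∀ j, 2 ≤ dg j)
    (hghom : ∀ j, (g j).IsHomogeneous (dg j))
    (e : Fin s → ℕ) (he : ∀ j, 2 ≤ e j)
    (hKfact : K = (∏ i, ℓ i) * ∏ j, g j ^ e j) :
    n ≤ 6 := by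
  have hirr : ∀ p, Irreducible p → p ∣ K → p.IsHomogeneous 1 ∨ p ^ 2 ∣ K := by
    rw [hKfact]
    exact fun _ => isHomogeneous_one_or_sq_dvd_of_dvd_prod_mul_prod_pow hℓ he
  rw [hK] at hirr
  have hcard := essential_pencil_dimension_bound_general hF hG hFcr hGcr (fun p => hcop p)
    hess ha hb hirr
  rw [Fintype.card_fin] at hcard
  omega
end
end
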